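/- arXiv:1203.0686 — 2 statements merged into one kernel-verified Lean document; each statement's English description precedes it below -/
import Mathlib

section
/- Let A be an analytic subset of a complete separable metric space (X,d) and let k be a positive integer with dimH A > k. Then there exists a compact subset B ⊆ A with 0 < H^k(B) < ∞ together with a metric d' on B satisfying the ultrametric inequality d'(x,y) ≤ max(d'(x,z), d'(z,y)) such that d' is bi-Lipschitz equivalent to d on B, i.e., there are constants 0 < c ≤ C with c · d(x,y) ≤ d'(x,y) ≤ C · d(x,y) for all x,y ∈ B. -/
open MeasureTheory
open scoped ENNReal

section Helpers

open Set

/-- Separation property with constant `c`. -/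
def SepProp {X : Type*} [MetricSpace X] (c : ℝ) (S : Set X) : Prop :=
  ∀ x ∈ S, ∀ y ∈ S, x ≠ y → ∃ C ⊆ S, x ∈ C ∧ y ∉ C ∧ ∀ a ∈ C, ∀ b ∈ S, b ∉ C →
    c * dist x y ≤ dist a b

theorem ultrametric_of_sep {X : Type*} [MetricSpace X] (B : Set X) (c : ℝ) (hc : 0 < c)
    (hS : SepProp c B) :
    ∃ d' : X → X → ℝ, (∀ x ∈ B, d' x x = 0) ∧ (∀ x ∈ B, ∀ y ∈ B, d' x y = d' y x) ∧
      (∀ x ∈ B, ∀ y ∈ B, ∀ z ∈ B, d' x y ≤ max (d' x z) (d' z y)) ∧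
      (∀ x ∈ B, ∀ y ∈ B, c * dist x y ≤ d' x y ∧ d' x y ≤ dist x y) := by
  classical
  let G : X → X → Set ℝ := fun x y => {g | g = 0 ∨ (0 ≤ g ∧ ∃ C ⊆ B, ((x ∈ C ∧ y ∉ C) ∨ (y ∈ C ∧ x ∉ C)) ∧
    ∀ a ∈ C, ∀ b ∈ B, b ∉ C → g ≤ dist a b)}
  have hub : ∀ x ∈ B, ∀ y ∈ B, ∀ g ∈ G x y, g ≤ dist x y := by
    rintro x hx y hy g (rfl | ⟨-, C, hCB, h | h, hg⟩)
    · exact dist_nonneg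
    · exact hg x h.1 y hy h.2
    · rw [dist_comm]; exact hg y h.1 x hx h.2
  have hbdd : ∀ x ∈ B, ∀ y ∈ B, BddAbove (G x y) := fun x hx y hy => ⟨_, hub x hx y hy⟩
  have hne : ∀ x y, (G x y).Nonempty := fun x y => ⟨0, Or.inl rfl⟩
  have hsymm : ∀ x y, G x y = G y x := by
    intro x y
    ext g
    simp only [G, mem_ofPred_eq]
    constructor <;> rintro (h | ⟨h0, C, h1, h2, h3⟩)
    · exact Or.inl h
    · exact Or.inr ⟨h0, C, h1, h2.symm, h3⟩
    · exact Or.inl h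
    · exact Or.inr ⟨h0, C, h1, h2.symm, h3⟩
  have h0 : ∀ x ∈ B, ∀ y ∈ B, 0 ≤ sSup (G x y) := fun x hx y hy =>
    le_csSup (hbdd x hx y hy) (Or.inl rfl)
  refine ⟨fun x y => sSup (G x y), ?_, ?_, ?_, ?_⟩
  · intro x hx
    refine le_antisymm ?_ (h0 x hx x hx)
    refine csSup_le (hne _ _) fun g hg => ?_
    simpa using hub x hx x hx g hg
  · intro x _ y _
    simp only [hsymm x y]
  · intro x hx y hy z hz
    refine csSup_le (hne _ _) ?_
    rintro g (rfl | ⟨hg0, C, hCB, h, hg⟩)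
    · exact le_max_of_le_left (h0 x hx z hz)
    · by_cases hzx : (x ∈ C ∧ z ∉ C) ∨ (z ∈ C ∧ x ∉ C)
      · exact le_max_of_le_left (le_csSup (hbdd x hx z hz) (Or.inr ⟨hg0, C, hCB, hzx, hg⟩))
      · refine le_max_of_le_right (le_csSup (hbdd z hz y hy) (Or.inr ⟨hg0, C, hCB, ?_, hg⟩))
        tauto
  · intro x hx y hy
    refine ⟨?_, csSup_le (hne _ _) (hub x hx y hy)⟩
    by_cases hxy : x = y
    · subst hxy; simpa using h0 x hx x hx
    obtain ⟨C, hCB, h1, h2, h3⟩ := hS x hx y hy hxy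
    exact le_csSup (hbdd x hx y hy) (Or.inr ⟨by positivity, C, hCB, Or.inl ⟨h1, h2⟩, h3⟩)

/-- Hausdorff content of exponent `s`. -/
noncomputable def content (X : Type*) [MetricSpace X] (s : ℝ) : OuterMeasure X :=
  OuterMeasure.ofFunction (fun U => ⨆ _ : U.Nonempty, Metric.ediam U ^ s) (by simp)

theorem content_le {X : Type*} [MetricSpace X] (s : ℝ) (U : Set X) :
    content X s U ≤ Metric.ediam U ^ s :=
  (OuterMeasure.ofFunction_le U).trans (iSup_le fun _ => le_rfl)

theorem content_closedBall_le {X : Type*} [MetricSpace X] (s : ℝ) (hs : 0 < s) (x : X) (ρ : ℝ)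
    (hρ : 0 ≤ ρ) : content X s (Metric.closedBall x ρ) ≤ ENNReal.ofReal ((2 * ρ) ^ s) := by
  refine (content_le s _).trans ?_
  rw [← ENNReal.ofReal_rpow_of_nonneg (by positivity) hs.le]
  gcongr
  refine Metric.ediam_le fun a ha b hb => ?_
  rw [edist_dist]
  apply ENNReal.ofReal_le_ofReal
  have := dist_triangle_right a b x
  rw [Metric.mem_closedBall] at ha hb
  linarith

theorem exists_cover_of_content_lt {X : Type*} [MetricSpace X] (s : ℝ) (A : Set X) (c : ℝ≥0∞)
    (h : content X s A < c) : ∃ t : ℕ → Set X, A ⊆ ⋃ n, t n ∧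
      ∑' n, (⨆ _ : (t n).Nonempty, Metric.ediam (t n) ^ s) < c := by
  unfold content at h
  rw [OuterMeasure.ofFunction_apply] at h
  simp only [iInf_lt_iff] at h
  obtain ⟨t, ht, h⟩ := h
  exact ⟨t, ht, h⟩

theorem hausdorff_zero_of_content_zero {X : Type*} [MetricSpace X] [MeasurableSpace X]
    [BorelSpace X] (s : ℝ) (hs : 0 < s) (A : Set X) (h : content X s A = 0) : μH[s] A = 0 := by
  rw [Measure.hausdorffMeasure_apply]
  simp only [ENNReal.iSup_eq_zero]
  intro r hr
  rw [← nonpos_iff_eq_zero]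
  refine le_of_forall_gt fun ε hε => ?_
  have hrs : 0 < r ^ s := by
    rcases eq_or_ne r ⊤ with rfl | hrt
    · rw [ENNReal.top_rpow_of_pos hs]; exact ENNReal.zero_lt_top
    · exact ENNReal.rpow_pos hr hrt
  obtain ⟨t, ht, hlt⟩ := exists_cover_of_content_lt s A (min ε (r ^ s)) (by
    rw [h]; exact lt_min hε hrs)
  refine lt_of_le_of_lt ?_ (hlt.trans_le (min_le_left _ _))
  refine iInf_le_of_le t (iInf_le_of_le ht (iInf_le_of_le ?_ le_rfl))
  intro n
  rcases (t n).eq_empty_or_nonempty with he | hne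
  · rw [he]; simp
  have h1 : Metric.ediam (t n) ^ s < r ^ s := by
    refine lt_of_le_of_lt ?_ (hlt.trans_le (min_le_right _ _))
    refine le_trans ?_ (ENNReal.le_tsum n)
    exact le_iSup (fun _ : (t n).Nonempty => Metric.ediam (t n) ^ s) hne
  exact ((ENNReal.rpow_lt_rpow_iff hs).1 h1).le

theorem light_null {X : Type*} [MetricSpace X] [TopologicalSpace.SeparableSpace X] (s : ℝ)
    (hs : 0 < s) (E : Set X) (ρ0 : ℝ) (hρ0 : 0 < ρ0)
    (hE : ∀ x ∈ E, ∀ ρ, 0 < ρ → ρ ≤ ρ0 →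
      content X s (E ∩ Metric.closedBall x ρ) ≤ ENNReal.ofReal (ρ ^ s / 4)) :
    content X s E = 0 := by
  have : SecondCountableTopology X := UniformSpace.secondCountable_of_separable X
  refine measure_null_of_locally_null E fun x hx => ?_
  refine ⟨E ∩ Metric.closedBall x ρ0, ?_, ?_⟩
  · exact Filter.inter_mem self_mem_nhdsWithin
      (mem_nhdsWithin_of_mem_nhds (Metric.closedBall_mem_nhds x hρ0))
  by_contra hc
  set c := content X s (E ∩ Metric.closedBall x ρ0) with hcdef
  have hc1 : c ≤ ENNReal.ofReal (ρ0 ^ s / 4) := hE x hx ρ0 hρ0 le_rfl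
  have hρs : 0 < ρ0 ^ s := by positivity
  have hctop : c ≠ ⊤ := ne_top_of_le_ne_top ENNReal.ofReal_ne_top hc1
  have hc2 : c < ENNReal.ofReal (ρ0 ^ s) := by
    refine hc1.trans_lt ?_
    rw [ENNReal.ofReal_lt_ofReal_iff hρs]
    linarith
  have hc3 : c < 2 * c := by
    rw [two_mul]
    exact ENNReal.lt_add_right hctop hc
  obtain ⟨t, ht, hlt⟩ := exists_cover_of_content_lt s _ (min (2 * c) (ENNReal.ofReal (ρ0 ^ s)))
    (lt_min hc3 hc2)
  have hn : ∀ n, content X s (t n ∩ E) ≤ (⨆ _ : (t n).Nonempty, Metric.ediam (t n) ^ s) / 4 := by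
    intro n
    rcases (t n ∩ E).eq_empty_or_nonempty with he | ⟨y, hyt, hyE⟩
    · rw [he]; simp
    have hne : (t n).Nonempty := ⟨y, hyt⟩
    have hval : (⨆ _ : (t n).Nonempty, Metric.ediam (t n) ^ s) = Metric.ediam (t n) ^ s :=
      iSup_pos hne
    have h1 : Metric.ediam (t n) ^ s < ENNReal.ofReal (ρ0 ^ s) := by
      rw [← hval]
      exact (ENNReal.le_tsum n).trans_lt (hlt.trans_le (min_le_right _ _))
    rw [← ENNReal.ofReal_rpow_of_pos hρ0, ENNReal.rpow_lt_rpow_iff hs] at h1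
    rw [hval]
    have hdt : Metric.ediam (t n) ≠ ⊤ := h1.ne_top
    set d := (Metric.ediam (t n)).toReal with hd
    have hdd : Metric.ediam (t n) = ENNReal.ofReal d := (ENNReal.ofReal_toReal hdt).symm
    have hdρ : d ≤ ρ0 := by
      rw [hdd, ENNReal.ofReal_lt_ofReal_iff hρ0] at h1
      exact h1.le
    have hd0 : 0 ≤ d := ENNReal.toReal_nonneg
    clear_value d
    rcases hd0.eq_or_lt with h0 | hpos
    · refine (measure_mono inter_subset_left).trans ((content_le s (t n)).trans ?_)
      rw [hdd, ← h0]
      simp [hs]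
    · calc content X s (t n ∩ E) ≤ content X s (E ∩ Metric.closedBall y d) := by
            apply measure_mono
            rintro z ⟨hz1, hz2⟩
            refine ⟨hz2, ?_⟩
            rw [Metric.mem_closedBall, ← ENNReal.ofReal_le_ofReal_iff hpos.le, ← hdd, ← edist_dist]
            exact Metric.edist_le_ediam_of_mem hz1 hyt
        _ ≤ ENNReal.ofReal (d ^ s / 4) := hE y hyE d hpos hdρ
        _ = Metric.ediam (t n) ^ s / 4 := by
            rw [hdd, ENNReal.ofReal_rpow_of_pos hpos, ENNReal.ofReal_div_of_pos (by norm_num)]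
            norm_num
  have hfin : c ≤ 2 * c / 4 := by
    calc c ≤ content X s (⋃ n, t n ∩ E) := by
          apply measure_mono
          intro z hz
          obtain ⟨n, hn⟩ := mem_iUnion.1 (ht hz)
          exact mem_iUnion.2 ⟨n, hn, hz.1⟩
      _ ≤ ∑' n, content X s (t n ∩ E) := measure_iUnion_le _
      _ ≤ ∑' n, (⨆ _ : (t n).Nonempty, Metric.ediam (t n) ^ s) / 4 := ENNReal.tsum_le_tsum hn
      _ = (∑' n, (⨆ _ : (t n).Nonempty, Metric.ediam (t n) ^ s)) / 4 := by
          simp only [div_eq_mul_inv]; rw [ENNReal.tsum_mul_right]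
      _ ≤ 2 * c / 4 := by
          gcongr
          exact hlt.le.trans (min_le_left _ _)
  have hcpos : 0 < c.toReal := ENNReal.toReal_pos hc hctop
  have := ENNReal.toReal_mono (by
    refine ENNReal.div_ne_top (ENNReal.mul_ne_top (by norm_num) hctop) (by norm_num)) hfin
  rw [ENNReal.toReal_div, ENNReal.toReal_mul] at this
  norm_num at this
  linarith

theorem light_null' {X : Type*} [MetricSpace X] [TopologicalSpace.SeparableSpace X] (s : ℝ)
    (hs : 0 < s) (P : Set X) (Q : ℕ → Set X) (hPQ : P ⊆ ⋃ a, Q a) (ρ0 : ℝ) (hρ0 : 0 < ρ0) :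
    content X s {x ∈ P | ∀ a ρ, 0 < ρ → ρ ≤ ρ0 →
      content X s (P ∩ Q a ∩ Metric.closedBall x ρ) < ENNReal.ofReal (ρ ^ s / 4)} = 0 := by
  set L := {x ∈ P | ∀ a ρ, 0 < ρ → ρ ≤ ρ0 →
      content X s (P ∩ Q a ∩ Metric.closedBall x ρ) < ENNReal.ofReal (ρ ^ s / 4)} with hL
  have hsub : L ⊆ ⋃ a, L ∩ Q a := by
    intro x hx
    obtain ⟨a, ha⟩ := mem_iUnion.1 (hPQ hx.1)
    exact mem_iUnion.2 ⟨a, hx, ha⟩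
  refine measure_mono_null hsub (measure_iUnion_null fun a => ?_)
  refine light_null s hs _ ρ0 hρ0 ?_
  rintro x ⟨hx, -⟩ ρ h1 h2
  refine le_trans (measure_mono ?_) (hx.2 a ρ h1 h2).le
  rintro z ⟨⟨hz, hza⟩, hzb⟩
  exact ⟨⟨hz.1, hza⟩, hzb⟩

/-- Packing condition (caps). -/
def Adm {X : Type*} [MetricSpace X] (r : X → ℝ) (t L : ℝ) (J : Set X) : Prop :=
  ∀ (y : X) (u : ℝ), 0 < u → ∀ F : Finset X, (F : Set X) ⊆ J →
    (∀ j ∈ F, dist j y ≤ u ∧ r j ≤ u) → ∑ j ∈ F, r j ^ t ≤ L * u ^ t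

theorem Adm.mono {X : Type*} [MetricSpace X] {r : X → ℝ} {t L : ℝ} {J J' : Set X}
    (h : Adm r t L J) (hJ : J' ⊆ J) : Adm r t L J' :=
  fun y u hu F hF => h y u hu F (hF.trans hJ)

theorem exists_maximal_adm {X : Type*} [MetricSpace X] (I : Set X) (r : X → ℝ) (t L : ℝ)
    (hL : 0 ≤ L) : ∃ J, Maximal (· ∈ {J : Set X | J ⊆ I ∧ Adm r t L J}) J := by
  classical
  refine zorn_subset _ ?_
  intro c hc hchain
  rcases c.eq_empty_or_nonempty with rfl | hne
  · refine ⟨∅, ⟨empty_subset _, ?_⟩, by simp⟩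
    intro y u hu F hF _
    have : F = ∅ := by
      rw [← Finset.coe_eq_empty]; exact subset_empty_iff.1 hF
    subst this
    simp; positivity
  · refine ⟨⋃₀ c, ⟨sUnion_subset fun s hs => (hc hs).1, ?_⟩, fun s hs => subset_sUnion_of_mem hs⟩
    intro y u hu F hF h
    obtain ⟨s, hs, hFs⟩ := DirectedOn.exists_mem_subset_of_finset_subset_biUnion (f := id) hne
      (hchain.directedOn) (s := F) (by simpa [sUnion_eq_biUnion] using hF)
    exact (hc hs).2 y u hu F hFs h

theorem selection {X : Type*} [MetricSpace X] (I : Set X) (r : X → ℝ) (hr : ∀ i ∈ I, 0 < r i)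
    (t : ℝ) (ht : 0 < t) (L : ℝ) (hL : 2 ≤ L) :
    ∃ J ⊆ I, Adm r t L J ∧ ∀ M : ℝ, (∀ F : Finset X, (F : Set X) ⊆ J → ∑ j ∈ F, r j ^ t ≤ M) →
      ∃ (Q : Set X) (u : X → ℝ), Q ⊆ I ∧ (∀ b ∈ Q, r b ≤ u b ∧ (L - 1) * u b ^ t ≤ M) ∧
        (∀ F : Finset X, (F : Set X) ⊆ Q → ∑ b ∈ F, u b ^ t ≤ M / (L - 1)) ∧
        ∀ i ∈ I, i ∉ J → ∃ b ∈ Q, dist i b ≤ 6 * u b ∧ r i ≤ 2 * u b := by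
  classical
  obtain ⟨J, hJ⟩ := exists_maximal_adm I r t L (by linarith)
  obtain ⟨hJI, hJA⟩ := hJ.prop
  refine ⟨J, hJI, hJA, ?_⟩
  intro M hM
  have hex : ∀ i, i ∈ I \ J → ∃ (y : X) (u : ℝ) (F : Finset X), 0 < u ∧ dist i y ≤ u ∧ r i ≤ u ∧
      (F : Set X) ⊆ J ∧ (∀ j ∈ F, dist j y ≤ u) ∧ (L - 1) * u ^ t ≤ ∑ j ∈ F, r j ^ t := by
    intro i hi
    have hnot : ¬ Adm r t L (insert i J) := by
      intro hA
      have h1 : insert i J ∈ {J : Set X | J ⊆ I ∧ Adm r t L J} :=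
        ⟨insert_subset hi.1 hJI, hA⟩
      exact hi.2 (hJ.le_of_ge h1 (subset_insert _ _) (mem_insert _ _))
    unfold Adm at hnot
    push Not at hnot
    obtain ⟨y, u, hu, F, hF, h, hlt⟩ := hnot
    have hiF : i ∈ F := by
      by_contra hiF
      have : (F : Set X) ⊆ J := by
        intro j hj
        rcases hF hj with rfl | h'
        · exact absurd hj hiF
        · exact h'
      exact absurd (hJA y u hu F this h) (not_le.2 hlt)
    refine ⟨y, u, F.erase i, hu, (h i hiF).1, (h i hiF).2, ?_, ?_, ?_⟩
    · intro j hj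
      have hj' := Finset.mem_erase.1 (Finset.mem_coe.1 hj)
      rcases hF hj'.2 with rfl | h'
      · exact absurd rfl hj'.1
      · exact h'
    · intro j hj
      exact (h j (Finset.mem_of_mem_erase hj)).1
    · have h1 := Finset.add_sum_erase F (fun j => r j ^ t) hiF
      have h2 : r i ^ t ≤ u ^ t :=
        Real.rpow_le_rpow (hr i hi.1).le (h i hiF).2 ht.le
      linarith
  choose! y u F hu hdy hru hFJ hFy hsum using hex
  have hle : ∀ i ∈ I \ J, (L - 1) * u i ^ t ≤ M := fun i hi => (hsum i hi).trans (hM _ (hFJ i hi))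
  have hL1 : 0 < L - 1 := by linarith
  obtain ⟨Q, hQ, hdisj, hcov⟩ := Vitali.exists_disjoint_subfamily_covering_enlargement
    (fun i => Metric.closedBall (y i) (u i)) (I \ J) u 2 one_lt_two (fun i hi => (hu i hi).le)
    ((M / (L - 1)) ^ (1 / t))
    (fun i hi => by
      have h1 : u i ^ t ≤ M / (L - 1) := by
        rw [le_div_iff₀ hL1, mul_comm]; exact hle i hi
      calc u i = (u i ^ t) ^ (1 / t) := by
            rw [← Real.rpow_mul (hu i hi).le, mul_one_div_cancel ht.ne', Real.rpow_one]
        _ ≤ _ := by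
            have := hu i hi
            gcongr)
    (fun i hi => ⟨i, hdy i hi⟩)
  refine ⟨Q, u, fun i hi => (hQ hi).1, fun b hb => ⟨hru b (hQ hb), hle b (hQ hb)⟩, ?_, ?_⟩
  · intro G hG
    rw [le_div_iff₀ hL1, Finset.sum_mul]
    have hdis : (G : Set X).PairwiseDisjoint F := by
      intro a ha b hb hab
      have := hdisj (hG ha) (hG hb) hab
      rw [Function.onFun, Finset.disjoint_left]
      intro j hja hjb
      exact Set.disjoint_left.1 this (hFy a (hQ (hG ha)) j hja) (hFy b (hQ (hG hb)) j hjb)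
    calc ∑ b ∈ G, u b ^ t * (L - 1) ≤ ∑ b ∈ G, ∑ j ∈ F b, r j ^ t := by
          refine Finset.sum_le_sum fun b hb => ?_
          rw [mul_comm]; exact hsum b (hQ (hG hb))
      _ = ∑ j ∈ G.biUnion F, r j ^ t := (Finset.sum_biUnion hdis).symm
      _ ≤ M := by
          refine hM _ ?_
          intro j hj
          obtain ⟨b, hb, hjb⟩ := Finset.mem_biUnion.1 (Finset.mem_coe.1 hj)
          exact hFJ b (hQ (hG hb)) hjb
  · intro i hi hiJ
    obtain ⟨b, hb, ⟨z, hz1, hz2⟩, hub⟩ := hcov i ⟨hi, hiJ⟩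
    refine ⟨b, hb, ?_, (hru i ⟨hi, hiJ⟩).trans hub⟩
    have h1 := hdy i ⟨hi, hiJ⟩
    have h2 := hdy b (hQ hb)
    rw [Metric.mem_closedBall] at hz1 hz2
    have h3 := dist_triangle i (y i) z
    have h4 := dist_triangle i z (y b)
    have h5 := dist_triangle_right i b (y b)
    rw [dist_comm (y i) z] at h3
    linarith


open Classical in
/-- Weight of the closed ball of radius `u` around `x` within `Y`. -/
noncomputable def bs {X : Type*} [MetricSpace X] (w : X → ℝ) (Y : Finset X) (x : X) (u : ℝ) : ℝ :=
  ∑ y ∈ Y.filter (fun y => dist y x ≤ u), w y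

theorem bs_mono {X : Type*} [MetricSpace X] {w : X → ℝ} {Y Y' : Finset X} {x x' : X} {u u' : ℝ}
    (hw : ∀ y ∈ Y', 0 ≤ w y) (hY : ∀ y ∈ Y, dist y x ≤ u → y ∈ Y' ∧ dist y x' ≤ u') :
    bs w Y x u ≤ bs w Y' x' u' := by
  classical
  unfold bs
  refine Finset.sum_le_sum_of_subset_of_nonneg ?_ ?_
  · intro y hy
    rw [Finset.mem_filter] at hy ⊢
    exact hY y hy.1 hy.2
  · intro y hy _
    exact hw y (Finset.mem_filter.1 hy).1

theorem bs_nonneg {X : Type*} [MetricSpace X] {w : X → ℝ} {Y : Finset X} {x : X} {u : ℝ}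
    (hw : ∀ y ∈ Y, 0 ≤ w y) : 0 ≤ bs w Y x u :=
  Finset.sum_nonneg fun y hy => hw y (Finset.mem_filter.1 hy).1

theorem rpow_interp {t M t' e : ℝ} (ht : 0 ≤ t) (h1 : t ≤ M) (h2 : t ≤ t') (he : 0 ≤ e)
    (he1 : e ≤ 1) : t ≤ M ^ e * t' ^ (1 - e) := by
  calc t = t ^ e * t ^ (1 - e) := by
        rw [← Real.rpow_add' ht (by norm_num)]; simp
    _ ≤ M ^ e * t' ^ (1 - e) := by
        have := sub_nonneg.2 he1
        have h3 : 0 ≤ M := ht.trans h1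
        gcongr

theorem pigeon_growth (m : ℕ) (hm : 1 ≤ m) (v : ℕ → ℝ) (M : ℝ) (h0 : 0 < v 0) (hM : v m ≤ M)
    (h0M : v 0 ≤ M) :
    ∃ j < m, v (j + 1) ≤ v j * (M / v 0) ^ (1 / (m : ℝ)) := by
  by_contra! h
  set q := (M / v 0) ^ (1 / (m : ℝ)) with hq
  have hMpos : 0 < M := lt_of_lt_of_le h0 h0M
  have hqpos : 0 < q := by positivity
  have hqm : q ^ m = M / v 0 := by
    rw [hq, ← Real.rpow_natCast, ← Real.rpow_mul (by positivity)]
    have : (m : ℝ) ≠ 0 := by positivity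
    rw [one_div_mul_cancel this, Real.rpow_one]
  have key : ∀ j, j ≤ m → v 0 * q ^ j ≤ v j ∧ (1 ≤ j → v 0 * q ^ j < v j) := by
    intro j
    induction j with
    | zero => intro _; simp
    | succ j ih =>
      intro hj
      have h1 := (ih (by omega)).1
      have h2 := h j (by omega)
      have : v 0 * q ^ (j + 1) < v (j + 1) := by
        calc v 0 * q ^ (j + 1) = (v 0 * q ^ j) * q := by ring
          _ ≤ v j * q := by gcongr
          _ < _ := h2
      exact ⟨this.le, fun _ => this⟩
  have := (key m le_rfl).2 hm
  rw [hqm] at this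
  have h3 : v 0 * (M / v 0) = M := by field_simp
  linarith

theorem region_growing {X : Type*} [MetricSpace X] (m : ℕ) (hm : 2 ≤ m) (w : X → ℝ) (r0 : ℝ)
    (hr0 : 0 < r0) :
    ∀ n : ℕ, ∀ N : ℕ, ∀ Y : Finset X, Y.card ≤ N → (∀ y ∈ Y, 0 < w y) →
      (∀ x ∈ Y, ∀ y ∈ Y, dist x y ≤ 4 * (2 ^ n * r0)) →
      (∀ x ∈ Y, ∀ y ∈ Y, x ≠ y → 4 * r0 < dist x y) →
      ∀ M : ℝ, (∀ x ∈ Y, bs w Y x (2 ^ n * r0) ≤ M) →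
      ∃ S ⊆ Y, ∃ ν : X → ℝ, (∀ x ∈ S, 0 ≤ ν x) ∧ ∑ x ∈ S, ν x = ∑ x ∈ Y, w x ∧
        SepProp (1 / (8 * m)) (S : Set X) ∧
        ∀ x ∈ S, ∀ u, 0 < u → u < (2 ^ n * r0) / (2 * m) →
          bs ν S x u ≤ M ^ (1 / (m : ℝ)) * (bs w Y x (8 * m * u)) ^ (1 - 1 / (m : ℝ)) := by
  classical
  have hm0 : (2 : ℝ) ≤ m := by exact_mod_cast hm
  have he0 : (0 : ℝ) ≤ 1 / (m : ℝ) := by positivity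
  have he1 : 1 / (m : ℝ) ≤ 1 := by
    rw [div_le_one (by linarith)]; linarith
  intro n
  induction n with
  | zero =>
    intro N Y _ hw hd hsep M hM
    refine ⟨Y, subset_rfl, w, fun x hx => (hw x hx).le, rfl, ?_, ?_⟩
    · intro x hx y hy hxy
      exfalso
      have := hd x hx y hy
      have := hsep x hx y hy hxy
      simp at *
      linarith
    · intro x hx u hu hu2
      have hw' : ∀ y ∈ Y, 0 ≤ w y := fun y hy => (hw y hy).le
      refine rpow_interp (bs_nonneg hw') (le_trans (bs_mono hw' ?_) (hM x hx)) (bs_mono hw' ?_) he0 he1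
      · intro y hy hyu
        refine ⟨hy, hyu.trans ?_⟩
        refine hu2.le.trans ?_
        apply div_le_self (by positivity) (by linarith)
      · intro y hy hyu
        refine ⟨hy, hyu.trans ?_⟩
        nlinarith
  | succ n ihn =>
    intro N
    induction N with
    | zero =>
      intro Y hc _ _ _ M _
      have : Y = ∅ := by simpa using hc
      subst this
      exact ⟨∅, subset_rfl, w, by simp, rfl, by intro x hx; simp at hx, by simp⟩
    | succ N ihN =>
      intro Y hc hw hd hsep M hM
      have hw' : ∀ y ∈ Y, 0 ≤ w y := fun y hy => (hw y hy).le
      rcases Y.eq_empty_or_nonempty with rfl | hne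
      · exact ⟨∅, subset_rfl, w, by simp, rfl, by intro x hx; simp at hx, by simp⟩
      set r : ℝ := 2 ^ (n + 1) * r0 with hr
      have hr2 : 2 ^ n * r0 = r / 2 := by rw [hr]; ring
      have hrpos : 0 < r := by positivity
      obtain ⟨x1, hx1, hmax⟩ := Finset.exists_max_image Y (fun x => bs w Y x (r / 2)) hne
      let R : ℕ → ℝ := fun j => r / 2 + j * (r / (2 * m))
      let v : ℕ → ℝ := fun j => bs w Y x1 (R j)
      have hR0 : R 0 = r / 2 := by simp [R]
      have hRm : R m = r := by simp only [R]; field_simp; ring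
      have hRmono : Monotone R := by
        intro i j hij
        have : (i : ℝ) ≤ j := by exact_mod_cast hij
        simp only [R]; gcongr
      have hRs : ∀ j, R (j + 1) = R j + r / (2 * m) := by
        intro j; simp only [R]; push_cast; ring
      have hvmono : Monotone v := by
        intro i j hij
        exact bs_mono hw' fun y hy h => ⟨hy, h.trans (hRmono hij)⟩
      have hv0 : 0 < v 0 := by
        have h1 : w x1 ≤ v 0 := by
          refine Finset.single_le_sum (f := w) (fun y hy => hw' y (Finset.mem_filter.1 hy).1) ?_
          rw [Finset.mem_filter]
          refine ⟨hx1, ?_⟩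
          rw [dist_self, hR0]; positivity
        exact lt_of_lt_of_le (hw x1 hx1) h1
      have hvm : v m ≤ M := by
        have := hM x1 hx1
        simp only [v, hRm]; exact this
      obtain ⟨j, hjm, hj⟩ := pigeon_growth m (by omega) v M hv0 hvm ((hvmono (Nat.zero_le m)).trans hvm)
      have hMpos : 0 < M := lt_of_lt_of_le hv0 ((hvmono (Nat.zero_le m)).trans hvm)
      have hvj : 0 < v j := lt_of_lt_of_le hv0 (hvmono (Nat.zero_le j))
      have hRj1 : R (j + 1) ≤ r := by rw [← hRm]; exact hRmono (by omega)
      have hRj : R j ≤ r := by rw [← hRm]; exact hRmono (by omega)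
      have hRj0 : 0 < R j := by
        have := hRmono (Nat.zero_le j); rw [hR0] at this; linarith
      have hgap0 : 0 < r / (2 * m) := by positivity
      set P := Y.filter (fun y => dist y x1 ≤ R j) with hP
      set Z := Y.filter (fun y => R (j + 1) < dist y x1) with hZ
      have hPY : P ⊆ Y := Finset.filter_subset _ _
      have hZY : Z ⊆ Y := Finset.filter_subset _ _
      obtain ⟨SP, hSP, νP, hνP0, hνPs, hsepP, hbP⟩ := ihn P.card P le_rfl (fun y hy => hw y (hPY hy))
        (by
          intro x hx y hy
          have h1 := (Finset.mem_filter.1 hx).2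
          have h2 := (Finset.mem_filter.1 hy).2
          have := dist_triangle_right x y x1
          rw [hr2]; linarith)
        (fun x hx y hy => hsep x (hPY hx) y (hPY hy)) (v 0)
        (by
          intro x hx
          rw [hr2]
          refine le_trans (bs_mono hw' (fun y hy h => ⟨hPY hy, h⟩)) ?_
          have := hmax x (hPY hx)
          simpa [v, hR0] using this)
      obtain ⟨SZ, hSZ, νZ, hνZ0, hνZs, hsepZ, hbZ⟩ := ihN Z
        (by
          have : Z ⊆ Y.erase x1 := by
            intro y hy
            rw [Finset.mem_erase]
            refine ⟨?_, hZY hy⟩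
            rintro rfl
            have := (Finset.mem_filter.1 hy).2
            rw [dist_self, hRs] at this
            linarith
          have := Finset.card_le_card this
          rw [Finset.card_erase_of_mem hx1] at this
          omega)
        (fun y hy => hw y (hZY hy)) (fun x hx y hy => hd x (hZY hx) y (hZY hy))
        (fun x hx y hy => hsep x (hZY hx) y (hZY hy)) M
        (fun x hx => le_trans (bs_mono hw' (fun y hy h => ⟨hZY hy, h⟩)) (hM x (hZY hx)))
      have hgap : ∀ a ∈ P, ∀ b ∈ Z, r / (2 * m) < dist a b := by
        intro a ha b hb
        have h1 := (Finset.mem_filter.1 ha).2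
        have h2 := (Finset.mem_filter.1 hb).2
        rw [hRs] at h2
        have := dist_triangle b a x1
        rw [dist_comm b a] at this
        linarith
      have hdisj : ∀ a ∈ SP, a ∉ SZ := by
        intro a ha ha'
        have := hgap a (hSP ha) a (hSZ ha')
        rw [dist_self] at this; linarith
      have hdisj' : Disjoint SP SZ := Finset.disjoint_left.2 hdisj
      set β := v (j + 1) / v j with hβ
      have hβ0 : 0 ≤ β := div_nonneg (hv0.le.trans (hvmono (Nat.zero_le _))) hvj.le
      have hβle : β * (v 0) ^ (1 / (m : ℝ)) ≤ M ^ (1 / (m : ℝ)) := by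
        have : β ≤ (M / v 0) ^ (1 / (m : ℝ)) := by
          rw [hβ, div_le_iff₀ hvj, mul_comm]; exact hj
        calc β * (v 0) ^ (1 / (m : ℝ)) ≤ (M / v 0) ^ (1 / (m : ℝ)) * (v 0) ^ (1 / (m : ℝ)) := by
              gcongr
          _ = M ^ (1 / (m : ℝ)) := by
              rw [← Real.mul_rpow (by positivity) hv0.le, div_mul_cancel₀ _ hv0.ne']
      let ν : X → ℝ := fun x => if x ∈ SP then β * νP x else νZ x
      have hνP : ∀ x ∈ SP, ν x = β * νP x := fun x hx => by simp [ν, hx]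
      have hνZ : ∀ x ∈ SZ, ν x = νZ x := fun x hx => by
        have : x ∉ SP := fun h => hdisj x h hx
        simp [ν, this]
      have hsumP : ∑ x ∈ SP, ν x = v (j + 1) := by
        rw [Finset.sum_congr rfl hνP, ← Finset.mul_sum, hνPs]
        have : ∑ x ∈ P, w x = v j := rfl
        rw [this, hβ, div_mul_cancel₀ _ hvj.ne']
      have hsumZ : ∑ x ∈ SZ, ν x = ∑ x ∈ Z, w x := by
        rw [Finset.sum_congr rfl hνZ, hνZs]
      have hν0 : ∀ x ∈ SP ∪ SZ, 0 ≤ ν x := by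
        intro x hx
        rcases Finset.mem_union.1 hx with h | h
        · rw [hνP x h]; exact mul_nonneg hβ0 (hνP0 x h)
        · rw [hνZ x h]; exact hνZ0 x h
      refine ⟨SP ∪ SZ, Finset.union_subset (hSP.trans hPY) (hSZ.trans hZY), ν, hν0, ?_, ?_, ?_⟩
      · rw [Finset.sum_union hdisj', hsumP, hsumZ]
        rw [← Finset.sum_filter_add_sum_filter_not Y (fun y => dist y x1 ≤ R (j + 1))]
        congr 1
        apply Finset.sum_congr _ fun _ _ => rfl
        ext y; simp [hZ]
      · have hc0 : ∀ x ∈ SP ∪ SZ, ∀ y ∈ SP ∪ SZ, 1 / (8 * (m : ℝ)) * dist x y ≤ r / (2 * m) := by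
          intro x hx y hy
          have hsub : SP ∪ SZ ⊆ Y := Finset.union_subset (hSP.trans hPY) (hSZ.trans hZY)
          have := hd x (hsub hx) y (hsub hy)
          calc 1 / (8 * (m : ℝ)) * dist x y ≤ 1 / (8 * (m : ℝ)) * (4 * r) := by gcongr
            _ = r / (2 * m) := by field_simp; ring
        intro x hx y hy hxy
        have hcxy := hc0 x (by exact_mod_cast hx) y (by exact_mod_cast hy)
        have hx' : x ∈ SP ∨ x ∈ SZ := by simpa using hx
        have hy' : y ∈ SP ∨ y ∈ SZ := by simpa using hy
        rcases hx' with hxP | hxZ <;> rcases hy' with hyP | hyZ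
        · obtain ⟨C, hC, hxC, hyC, hCs⟩ := hsepP x hxP y hyP hxy
          refine ⟨C, hC.trans (by intro a ha; simp at ha ⊢; exact Or.inl ha), hxC, hyC, ?_⟩
          intro a ha b hb hbC
          have hb' : b ∈ SP ∨ b ∈ SZ := by simpa using hb
          rcases hb' with hbP | hbZ
          · exact hCs a ha b hbP hbC
          · exact hcxy.trans (hgap a (hSP (hC ha)) b (hSZ hbZ)).le
        · refine ⟨SP, by intro a ha; simp at ha ⊢; exact Or.inl ha, hxP, fun h => hdisj y h hyZ, ?_⟩
          intro a ha b hb hbC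
          have hb' : b ∈ SP ∨ b ∈ SZ := by simpa using hb
          exact hcxy.trans (hgap a (hSP ha) b (hSZ (hb'.resolve_left hbC))).le
        · refine ⟨SZ, by intro a ha; simp at ha ⊢; exact Or.inr ha, hxZ, fun h => hdisj y hyP h, ?_⟩
          intro a ha b hb hbC
          have hb' : b ∈ SP ∨ b ∈ SZ := by simpa using hb
          rw [dist_comm a b]
          exact hcxy.trans (hgap b (hSP (hb'.resolve_right hbC)) a (hSZ ha)).le
        · obtain ⟨C, hC, hxC, hyC, hCs⟩ := hsepZ x hxZ y hyZ hxy
          refine ⟨C, hC.trans (by intro a ha; simp at ha ⊢; exact Or.inr ha), hxC, hyC, ?_⟩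
          intro a ha b hb hbC
          have hb' : b ∈ SP ∨ b ∈ SZ := by simpa using hb
          rcases hb' with hbP | hbZ
          · rw [dist_comm a b]
            exact hcxy.trans (hgap b (hSP hbP) a (hSZ (hC ha))).le
          · exact hCs a ha b hbZ hbC
      · intro x hx u hu hur
        have h1e : 0 ≤ 1 - 1 / (m : ℝ) := sub_nonneg.2 he1
        rcases Finset.mem_union.1 hx with hxP | hxZ
        · have hfil : (SP ∪ SZ).filter (fun y => dist y x ≤ u) = SP.filter (fun y => dist y x ≤ u) := by
            ext y
            simp only [Finset.mem_filter, Finset.mem_union]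
            constructor
            · rintro ⟨h | h, h2⟩
              · exact ⟨h, h2⟩
              · have := hgap x (hSP hxP) y (hSZ h)
                rw [dist_comm] at this
                linarith
            · rintro ⟨h, h2⟩; exact ⟨Or.inl h, h2⟩
          have hbs : bs ν (SP ∪ SZ) x u = bs ν SP x u := by
            unfold bs; rw [hfil]
          rw [hbs]
          by_cases hu2 : u < (2 ^ n * r0) / (2 * m)
          · have h1 : bs ν SP x u = β * bs νP SP x u := by
              unfold bs
              rw [Finset.mul_sum]
              exact Finset.sum_congr rfl fun y hy => hνP y (Finset.mem_filter.1 hy).1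
            rw [h1]
            have h2 := hbP x hxP u hu hu2
            have h3 : bs w P x (8 * m * u) ≤ bs w Y x (8 * m * u) :=
              bs_mono hw' fun y hy h => ⟨hPY hy, h⟩
            have h4 : 0 ≤ bs w P x (8 * m * u) := bs_nonneg fun y hy => hw' y (hPY hy)
            calc β * bs νP SP x u ≤ β * ((v 0) ^ (1 / (m : ℝ)) * bs w P x (8 * m * u) ^ (1 - 1 / (m : ℝ))) := by
                  gcongr
              _ = (β * (v 0) ^ (1 / (m : ℝ))) * bs w P x (8 * m * u) ^ (1 - 1 / (m : ℝ)) := by ring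
              _ ≤ M ^ (1 / (m : ℝ)) * bs w Y x (8 * m * u) ^ (1 - 1 / (m : ℝ)) := by
                  gcongr
          · have hle : bs ν SP x u ≤ v (j + 1) := by
              rw [← hsumP]
              refine Finset.sum_le_sum_of_subset_of_nonneg (Finset.filter_subset _ _) ?_
              intro y hy _
              exact hν0 y (Finset.mem_union_left _ hy)
            refine hle.trans ?_
            refine rpow_interp (hv0.le.trans (hvmono (Nat.zero_le _))) ((hvmono hjm).trans hvm) ?_ he0 he1
            refine bs_mono hw' fun y hy h => ⟨hy, ?_⟩
            have hx1' := (Finset.mem_filter.1 (hSP hxP)).2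
            have := dist_triangle_right y x x1
            have h8 : 2 * r ≤ 8 * m * u := by
              rw [hr2, not_lt, div_le_iff₀ (by positivity)] at hu2
              linarith
            linarith
        · have hfil : (SP ∪ SZ).filter (fun y => dist y x ≤ u) = SZ.filter (fun y => dist y x ≤ u) := by
            ext y
            simp only [Finset.mem_filter, Finset.mem_union]
            constructor
            · rintro ⟨h | h, h2⟩
              · have := hgap y (hSP h) x (hSZ hxZ)
                linarith
              · exact ⟨h, h2⟩
            · rintro ⟨h, h2⟩; exact ⟨Or.inr h, h2⟩
          have hbs : bs ν (SP ∪ SZ) x u = bs νZ SZ x u := by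
            unfold bs; rw [hfil]
            exact Finset.sum_congr rfl fun y hy => hνZ y (Finset.mem_filter.1 hy).1
          rw [hbs]
          have h2 := hbZ x hxZ u hu hur
          have h3 : bs w Z x (8 * m * u) ≤ bs w Y x (8 * m * u) :=
            bs_mono hw' fun y hy h => ⟨hZY hy, h⟩
          have h4 : 0 ≤ bs w Z x (8 * m * u) := bs_nonneg fun y hy => hw' y (hZY hy)
          refine h2.trans ?_
          gcongr

/-- Top-level form of region growing. -/
theorem region_growing_top {X : Type*} [MetricSpace X] (m : ℕ) (hm : 2 ≤ m) (w : X → ℝ)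
    (Y : Finset X) (hw : ∀ y ∈ Y, 0 < w y) :
    ∃ S ⊆ Y, ∃ ν : X → ℝ, (∀ x ∈ S, 0 ≤ ν x) ∧ ∑ x ∈ S, ν x = ∑ x ∈ Y, w x ∧
        SepProp (1 / (8 * m)) (S : Set X) ∧
        ∀ x ∈ S, ∀ u, 0 < u →
          bs ν S x u ≤ (∑ y ∈ Y, w y) ^ (1 / (m : ℝ)) * (bs w Y x (8 * m * u)) ^ (1 - 1 / (m : ℝ)) := by
  classical
  have hm0 : (2 : ℝ) ≤ m := by exact_mod_cast hm
  have hw' : ∀ y ∈ Y, 0 ≤ w y := fun y hy => (hw y hy).le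
  obtain ⟨r0, hr0, hsep⟩ : ∃ r0 : ℝ, 0 < r0 ∧ ∀ x ∈ Y, ∀ y ∈ Y, x ≠ y → 4 * r0 < dist x y := by
    have hfin : ((Y ×ˢ Y).filter fun p : X × X => p.1 ≠ p.2).Nonempty ∨
      ((Y ×ˢ Y).filter fun p : X × X => p.1 ≠ p.2) = ∅ := (Finset.eq_empty_or_nonempty _).symm
    rcases hfin with h | h
    · obtain ⟨p, hp, hmin⟩ := Finset.exists_min_image _ (fun p : X × X => dist p.1 p.2) h
      have hpos : 0 < dist p.1 p.2 := dist_pos.2 (Finset.mem_filter.1 hp).2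
      refine ⟨dist p.1 p.2 / 8, by positivity, fun x hx y hy hxy => ?_⟩
      have := hmin (x, y) (by simp [hx, hy, hxy])
      simp only at this
      linarith
    · refine ⟨1, one_pos, fun x hx y hy hxy => ?_⟩
      have : (x, y) ∈ ((Y ×ˢ Y).filter fun p : X × X => p.1 ≠ p.2) := by simp [hx, hy, hxy]
      rw [h] at this; simp at this
  obtain ⟨D, hD⟩ : ∃ D : ℝ, ∀ x ∈ Y, ∀ y ∈ Y, dist x y ≤ D := by
    have := (Y.finite_toSet).isBounded
    obtain ⟨D, hD⟩ := Metric.isBounded_iff.1 this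
    exact ⟨D, fun x hx y hy => hD hx hy⟩
  obtain ⟨n, hn⟩ : ∃ n : ℕ, 4 * m * |D| < 2 ^ n * r0 := by
    obtain ⟨n, hn⟩ := pow_unbounded_of_one_lt (4 * m * |D| / r0) (one_lt_two)
    exact ⟨n, by rwa [div_lt_iff₀ hr0] at hn⟩
  have hDm : |D| ≤ 4 * m * |D| := by nlinarith [abs_nonneg D]
  have hball : ∀ x, bs w Y x (2 ^ n * r0) ≤ ∑ y ∈ Y, w y := fun x =>
    Finset.sum_le_sum_of_subset_of_nonneg (Finset.filter_subset _ _) fun y hy _ => hw' y hy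
  obtain ⟨S, hS, ν, h0, h1, h2, h3⟩ := region_growing m hm w r0 hr0 n Y.card Y le_rfl hw
    (fun x hx y hy => by
      have := hD x hx y hy
      have := le_abs_self D
      linarith [abs_nonneg D]) hsep (∑ y ∈ Y, w y) (fun x _ => hball x)
  refine ⟨S, hS, ν, h0, h1, h2, ?_⟩
  intro x hx u hu
  by_cases hun : u < (2 ^ n * r0) / (2 * m)
  · exact h3 x hx u hu hun
  · rw [not_lt, div_le_iff₀ (by positivity)] at hun
    have hall : bs w Y x (8 * m * u) = ∑ y ∈ Y, w y := by
      unfold bs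
      rw [Finset.filter_true_of_mem]
      intro y hy
      have := hD y hy x (hS hx)
      have := le_abs_self D
      have : 0 < m * u := by positivity
      nlinarith
    rw [hall]
    refine rpow_interp (t := bs ν S x u) (bs_nonneg h0) ?_ ?_ (by positivity) ?_
    · rw [← h1]; exact Finset.sum_le_sum_of_subset_of_nonneg (Finset.filter_subset _ _) fun y hy _ => h0 y hy
    · rw [← h1]; exact Finset.sum_le_sum_of_subset_of_nonneg (Finset.filter_subset _ _) fun y hy _ => h0 y hy
    · rw [div_le_one (by linarith)]; linarith

theorem content_biUnion_closedBall_le {X : Type*} [MetricSpace X] (s : ℝ) (hs : 0 < s) (J : Set X)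
    (hJ : J.Countable) (g : X → ℝ) (hg : ∀ j ∈ J, 0 ≤ g j) (M l : ℝ) (hl : 0 ≤ l)
    (hM : ∀ F : Finset X, (F : Set X) ⊆ J → ∑ j ∈ F, g j ^ s ≤ M) :
    content X s (⋃ j ∈ J, Metric.closedBall j (l * g j)) ≤ ENNReal.ofReal ((2 * l) ^ s * M) := by
  classical
  refine (measure_biUnion_le _ hJ _).trans ?_
  rw [ENNReal.tsum_eq_iSup_sum]
  refine iSup_le fun F => ?_
  calc ∑ j ∈ F, content X s (Metric.closedBall (j : X) (l * g j))
      ≤ ∑ j ∈ F, ENNReal.ofReal ((2 * l) ^ s * g j ^ s) := by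
        refine Finset.sum_le_sum fun j _ => ?_
        have h0 := hg j j.2
        refine (content_closedBall_le s hs _ _ (by positivity)).trans ?_
        rw [← mul_assoc, Real.mul_rpow (by positivity) h0]
    _ = ENNReal.ofReal (∑ j ∈ F, (2 * l) ^ s * g j ^ s) := by
        rw [ENNReal.ofReal_sum_of_nonneg]
        intro j _
        have h0 := hg j j.2
        positivity
    _ ≤ _ := by
        apply ENNReal.ofReal_le_ofReal
        rw [← Finset.mul_sum]
        gcongr
        have h1 := hM (F.map (Function.Embedding.subtype _)) (by
          intro x hx
          simp at hx
          exact hx.1)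
        rwa [Finset.sum_map] at h1

theorem sum_biUnion_le_of_nonneg {ι X : Type*} [DecidableEq X] (B : Finset ι) (F : ι → Finset X)
    (f : X → ℝ) (hf : ∀ b ∈ B, ∀ i ∈ F b, 0 ≤ f i) :
    ∑ i ∈ B.biUnion F, f i ≤ ∑ b ∈ B, ∑ i ∈ F b, f i := by
  classical
  induction B using Finset.induction_on with
  | empty => simp
  | insert b B hb ih =>
    rw [Finset.biUnion_insert, Finset.sum_insert hb]
    have h1 := ih fun b' hb' => hf b' (Finset.mem_insert_of_mem hb')
    have h2 := Finset.sum_union_inter (s₁ := F b) (s₂ := B.biUnion F) (f := f)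
    have h3 : 0 ≤ ∑ i ∈ F b ∩ B.biUnion F, f i :=
      Finset.sum_nonneg fun i hi => hf b (Finset.mem_insert_self _ _) i (Finset.mem_inter.1 hi).1
    linarith

theorem SepProp.mono {X : Type*} [MetricSpace X] {c : ℝ} {S S' : Set X} (h : SepProp c S)
    (hS : S' ⊆ S) : SepProp c S' := by
  intro x hx y hy hxy
  obtain ⟨C, hC, h1, h2, h3⟩ := h x (hS hx) y (hS hy) hxy
  refine ⟨C ∩ S', inter_subset_right, ⟨h1, hx⟩, fun h => h2 h.1, ?_⟩
  intro a ha b hb hbC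
  exact h3 a ha.1 b (hS hb) fun h => hbC ⟨h, hb⟩

theorem mstage_first {X : Type*} [MetricSpace X] [TopologicalSpace.SeparableSpace X] (s : ℝ)
    (hs : 0 < s) (P : Set X) (Q : ℕ → Set X) (hPQ : P ⊆ ⋃ a, Q a) (ρ0 : ℝ) (hρ0 : 0 < ρ0)
    (r : ℝ) (hr : 0 < r) (hP : ENNReal.ofReal (r ^ s / 4) ≤ content X s P) :
    ∃ (ρ : X → ℝ) (α : X → ℕ) (J : Finset X),
      (∀ j ∈ J, 0 < ρ j ∧ ρ j ≤ ρ0 ∧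
        ENNReal.ofReal (ρ j ^ s / 4) ≤ content X s (P ∩ Q (α j) ∩ Metric.closedBall j (ρ j))) ∧
      (∀ i ∈ J, ∀ j ∈ J, i ≠ j → 4 * ρ i < dist i j) ∧
      Adm ρ s 2 (J : Set X) ∧
      r ^ s / (16 * 60 ^ s) ≤ ∑ j ∈ J, ρ j ^ s := by
  classical
  set T := {x ∈ P | ∃ a ρ, 0 < ρ ∧ ρ ≤ ρ0 ∧
      ENNReal.ofReal (ρ ^ s / 4) ≤ content X s (P ∩ Q a ∩ Metric.closedBall x ρ)} with hT
  have hTc : content X s P ≤ content X s T := by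
    have h1 := light_null' s hs P Q hPQ ρ0 hρ0
    set L := {x ∈ P | ∀ a ρ, 0 < ρ → ρ ≤ ρ0 →
      content X s (P ∩ Q a ∩ Metric.closedBall x ρ) < ENNReal.ofReal (ρ ^ s / 4)} with hL
    calc content X s P ≤ content X s (L ∪ T) := by
          apply measure_mono
          intro x hx
          by_cases h : x ∈ T
          · exact Or.inr h
          · left
            refine ⟨hx, fun a ρ h1 h2 => ?_⟩
            by_contra h3
            exact h ⟨hx, a, ρ, h1, h2, not_lt.1 h3⟩
      _ ≤ content X s L + content X s T := measure_union_le _ _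
      _ = content X s T := by rw [h1, zero_add]
  have hex : ∀ x, x ∈ T → ∃ a ρ, 0 < ρ ∧ ρ ≤ ρ0 ∧
      ENNReal.ofReal (ρ ^ s / 4) ≤ content X s (P ∩ Q a ∩ Metric.closedBall x ρ) := fun x hx => hx.2
  choose! α ρ hρpos hρle hheavy using hex
  obtain ⟨I, hIT, hIdisj, hIcov⟩ := Vitali.exists_disjoint_subfamily_covering_enlargement
    (fun i => Metric.closedBall i (4 * ρ i)) T ρ 2 one_lt_two (fun i hi => (hρpos i hi).le) ρ0 hρle
    (fun i hi => ⟨i, Metric.mem_closedBall_self (by have := hρpos i hi; positivity)⟩)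
  have hIc : I.Countable := by
    refine hIdisj.countable_of_nonempty_interior fun i hi => ⟨i, ?_⟩
    refine interior_mono Metric.ball_subset_closedBall ?_
    rw [Metric.isOpen_ball.interior_eq]
    exact Metric.mem_ball_self (by have := hρpos i (hIT hi); positivity)
  have hIsep : ∀ i ∈ I, ∀ j ∈ I, i ≠ j → 4 * ρ i < dist i j := by
    intro i hi j hj hij
    by_contra h
    have h1 := hIdisj hi hj hij
    have h2 : j ∈ Metric.closedBall i (4 * ρ i) := by
      rw [Metric.mem_closedBall, dist_comm]; exact not_lt.1 h
    have h3 : j ∈ Metric.closedBall j (4 * ρ j) :=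
      Metric.mem_closedBall_self (by have := hρpos j (hIT hj); positivity)
    exact Set.disjoint_left.1 h1 h2 h3
  obtain ⟨J, hJI, hJA, hJ⟩ := selection I ρ (fun i hi => hρpos i (hIT hi)) s hs 2 le_rfl
  set M := r ^ s / (16 * 60 ^ s) with hM
  have hMpos : 0 < M := by positivity
  have hbig : ∃ F : Finset X, (F : Set X) ⊆ J ∧ M < ∑ j ∈ F, ρ j ^ s := by
    by_contra! hcon
    obtain ⟨B, u, hBI, hB1, hB2, hB3⟩ := hJ M hcon
    have hu0 : ∀ b ∈ B, 0 ≤ u b := fun b hb => (hρpos b (hIT (hBI hb))).le.trans (hB1 b hb).1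
    have hcov : T ⊆ (⋃ j ∈ J, Metric.closedBall j (12 * ρ j)) ∪
        (⋃ b ∈ B, Metric.closedBall b (30 * u b)) := by
      intro p hp
      obtain ⟨i, hi, ⟨z, hz1, hz2⟩, hpi⟩ := hIcov p hp
      rw [Metric.mem_closedBall] at hz1 hz2
      have hd : dist p i ≤ 12 * ρ i := by
        have := dist_triangle_left p i z
        linarith
      by_cases hiJ : i ∈ J
      · left
        exact mem_iUnion₂.2 ⟨i, hiJ, hd⟩
      · right
        obtain ⟨b, hb, h1, h2⟩ := hB3 i hi hiJ
        refine mem_iUnion₂.2 ⟨b, hb, ?_⟩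
        rw [Metric.mem_closedBall]
        have := dist_triangle p i b
        linarith
    have h1 := content_biUnion_closedBall_le s hs J (hIc.mono hJI) ρ
      (fun j hj => (hρpos j (hIT (hJI hj))).le) M 12 (by norm_num) hcon
    have h2 := content_biUnion_closedBall_le s hs B (hIc.mono hBI) u hu0 M 30 (by norm_num)
      (by
        intro F hF
        have := hB2 F hF
        norm_num at this
        exact this)
    have h3 : ENNReal.ofReal (r ^ s / 4) ≤ ENNReal.ofReal ((2 * 12) ^ s * M + (2 * 30) ^ s * M) := by
      calc ENNReal.ofReal (r ^ s / 4) ≤ content X s T := hP.trans hTc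
        _ ≤ _ := measure_mono hcov
        _ ≤ _ := measure_union_le _ _
        _ ≤ _ := add_le_add h1 h2
        _ = _ := by rw [← ENNReal.ofReal_add (by positivity) (by positivity)]
    have h4 : (2 * 12 : ℝ) ^ s * M + (2 * 30) ^ s * M ≤ r ^ s / 8 := by
      have h5 : (2 * 12 : ℝ) ^ s ≤ 60 ^ s :=
        Real.rpow_le_rpow (by norm_num) (by norm_num) hs.le
      have h6 : (2 * 30 : ℝ) ^ s = 60 ^ s := by norm_num
      have h7 : (60 : ℝ) ^ s * M = r ^ s / 16 := by
        rw [hM]; field_simp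
      have h8 := mul_le_mul_of_nonneg_right h5 hMpos.le
      rw [h6]
      calc (2 * 12 : ℝ) ^ s * M + 60 ^ s * M ≤ 60 ^ s * M + 60 ^ s * M := add_le_add h8 le_rfl
        _ = r ^ s / 8 := by rw [h7]; ring
    have h5 : 0 < r ^ s := by positivity
    rw [ENNReal.ofReal_le_ofReal_iff (by positivity)] at h3
    linarith
  obtain ⟨F, hFJ, hF⟩ := hbig
  refine ⟨ρ, α, F, ?_, ?_, hJA.mono hFJ, hF.le⟩
  · intro j hj
    have := hIT (hJI (hFJ hj))
    exact ⟨hρpos j this, hρle j this, hheavy j this⟩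
  · intro i hi j hj hij
    exact hIsep i (hJI (hFJ hi)) j (hJI (hFJ hj)) hij

theorem mstage_second {X : Type*} [MetricSpace X] (s t : ℝ) (ht : 0 < t) (hst : t < s) (m : ℕ)
    (hm : 2 ≤ m) (c1 C2 dl L : ℝ) (hc1 : 0 < c1) (hdl : 0 < dl) (hL : 2 ≤ L)
    (hms : t < s * (1 - 1 / (m : ℝ)))
    (hC2 : C2 = ((2 / c1) * (8 * m) ^ s) ^ (1 - 1 / (m : ℝ)))
    (hsmall : C2 * (dl ^ (s * (1 - 1 / (m : ℝ)) - t) + 6 ^ (s * (1 - 1 / (m : ℝ))) / (L - 1)) < 1)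
    (r : ℝ) (hr : 0 < r) (ρ : X → ℝ) (J0 : Finset X) (hρ : ∀ j ∈ J0, 0 < ρ j ∧ ρ j ≤ dl * r)
    (hsep : ∀ i ∈ J0, ∀ j ∈ J0, i ≠ j → 4 * ρ i < dist i j)
    (hA : Adm ρ s 2 (J0 : Set X)) (hN : c1 * r ^ s ≤ ∑ j ∈ J0, ρ j ^ s) :
    ∃ J ⊆ J0, Adm ρ t L (J : Set X) ∧ SepProp (1 / (8 * m)) (J : Set X) ∧
      r ^ t ≤ ∑ j ∈ J, ρ j ^ t := by
  classical
  have hs : 0 < s := ht.trans hst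
  have hm0 : (2 : ℝ) ≤ m := by exact_mod_cast hm
  set e := 1 / (m : ℝ) with he
  have he1 : 0 < 1 - e := by
    rw [he, sub_pos, div_lt_one (by linarith)]; linarith
  set s' := s * (1 - e) with hs'
  obtain ⟨S, hS, ν, hν0, hνs, hνsep, hνb⟩ := region_growing_top m hm (fun j => ρ j ^ s) J0
    (fun y hy => Real.rpow_pos_of_pos (hρ y hy).1 s)
  set N := ∑ j ∈ J0, ρ j ^ s with hNdef
  have hNpos : 0 < N := lt_of_lt_of_le (by positivity) hN
  have hC2pos : 0 < C2 := by rw [hC2]; positivity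
  have hball : ∀ i ∈ S, ∀ u, ρ i ≤ u → bs ν S i u ≤ N * (C2 * (u / r) ^ s') := by
    intro i hi u hu
    have hupos : 0 < u := (hρ i (hS hi)).1.trans_le hu
    have h1 := hνb i hi u hupos
    have h2 : bs (fun j => ρ j ^ s) J0 i (8 * m * u) ≤ 2 * (8 * m * u) ^ s := by
      unfold bs
      refine hA i (8 * m * u) (by positivity) _ ?_ ?_
      · intro j hj; simp at hj; exact hj.1
      · intro j hj
        obtain ⟨hj1, hj2⟩ := Finset.mem_filter.1 hj
        refine ⟨hj2, ?_⟩
        by_cases hij : j = i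
        · subst hij
          nlinarith
        · have := hsep j hj1 i (hS hi) hij
          have := (hρ j hj1).1
          linarith
    have h0 : 0 ≤ bs (fun j => ρ j ^ s) J0 i (8 * m * u) :=
      bs_nonneg fun y hy => (Real.rpow_pos_of_pos (hρ y hy).1 s).le
    calc bs ν S i u ≤ N ^ e * (bs (fun j => ρ j ^ s) J0 i (8 * m * u)) ^ (1 - e) := h1
      _ ≤ N ^ e * (2 * (8 * m * u) ^ s) ^ (1 - e) := by gcongr
      _ = N ^ e * (N * (2 * (8 * m * u) ^ s / N)) ^ (1 - e) := by
          rw [mul_div_cancel₀ _ hNpos.ne']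
      _ = N * (2 * (8 * m * u) ^ s / N) ^ (1 - e) := by
          rw [Real.mul_rpow hNpos.le (by positivity), ← mul_assoc, ← Real.rpow_add hNpos]
          simp
      _ ≤ N * (2 * (8 * m * u) ^ s / (c1 * r ^ s)) ^ (1 - e) := by gcongr
      _ = N * (C2 * (u / r) ^ s') := by
          congr 1
          rw [hC2, hs', Real.rpow_mul (by positivity), ← Real.mul_rpow (by positivity) (by positivity)]
          congr 1
          rw [Real.mul_rpow (by positivity) hupos.le, Real.div_rpow hupos.le hr.le]
          field_simp
  obtain ⟨J, hJS, hJA, hJ⟩ := selection (S : Set X) ρ (fun i hi => (hρ i (hS hi)).1) t ht L hL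
  have hJfin : J.Finite := S.finite_toSet.subset hJS
  set Jf := hJfin.toFinset with hJf
  have hJfS : Jf ⊆ S := fun j hj => hJS (hJfin.mem_toFinset.1 hj)
  have hJcoe : (Jf : Set X) = J := hJfin.coe_toFinset
  by_cases hbig : r ^ t ≤ ∑ j ∈ Jf, ρ j ^ t
  · refine ⟨Jf, hJfS.trans hS, by rw [hJcoe]; exact hJA, ?_, hbig⟩
    exact hνsep.mono (by exact_mod_cast hJfS)
  exfalso
  push Not at hbig
  obtain ⟨B, u, hBS, hB1, hB2, hB3⟩ := hJ (r ^ t) (by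
    intro F hF
    refine le_trans (Finset.sum_le_sum_of_subset_of_nonneg (t := Jf) ?_ ?_) hbig.le
    · intro j hj; exact hJfin.mem_toFinset.2 (hF hj)
    · intro j hj _
      exact (Real.rpow_pos_of_pos (hρ j (hS (hJfS hj))).1 t).le)
  have hBfin : B.Finite := S.finite_toSet.subset hBS
  set Bf := hBfin.toFinset with hBf
  have hBcoe : (Bf : Set X) = B := hBfin.coe_toFinset
  have hst' : 0 < s' - t := by linarith
  have hrt : 0 < r ^ t := by positivity
  have hupos : ∀ b ∈ B, 0 < u b := fun b hb => (hρ b (hS (hBS hb))).1.trans_le (hB1 b hb).1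
  have hur : ∀ b ∈ B, u b ≤ r := by
    intro b hb
    have h1 := (hB1 b hb).2
    have h2 : u b ^ t ≤ r ^ t := by
      have : 0 < u b ^ t := Real.rpow_pos_of_pos (hupos b hb) t
      nlinarith
    exact (Real.rpow_le_rpow_iff (hupos b hb).le hr.le ht).1 h2
  have hJsum : ∑ j ∈ Jf, ν j ≤ N * (C2 * dl ^ (s' - t)) := by
    calc ∑ j ∈ Jf, ν j ≤ ∑ j ∈ Jf, N * (C2 * dl ^ (s' - t)) * (ρ j ^ t / r ^ t) := by
          refine Finset.sum_le_sum fun j hj => ?_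
          have hjS := hJfS hj
          have hj0 := hρ j (hS hjS)
          have h1 : ν j ≤ bs ν S j (ρ j) := by
            unfold bs
            refine Finset.single_le_sum (f := ν) (fun y hy => hν0 y (Finset.mem_filter.1 hy).1) ?_
            rw [Finset.mem_filter, dist_self]
            exact ⟨hjS, hj0.1.le⟩
          have hdiv : 0 < ρ j / r := div_pos hj0.1 hr
          have h2 : (ρ j / r) ^ s' ≤ dl ^ (s' - t) * (ρ j ^ t / r ^ t) := by
            rw [← Real.div_rpow hj0.1.le hr.le]
            calc (ρ j / r) ^ s' = (ρ j / r) ^ (s' - t) * (ρ j / r) ^ t := by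
                  rw [← Real.rpow_add hdiv]; simp
              _ ≤ _ := by
                  gcongr
                  rw [div_le_iff₀ hr]; exact hj0.2
          calc ν j ≤ N * (C2 * (ρ j / r) ^ s') := h1.trans (hball j hjS _ le_rfl)
            _ ≤ N * (C2 * (dl ^ (s' - t) * (ρ j ^ t / r ^ t))) := by gcongr
            _ = _ := by ring
      _ = N * (C2 * dl ^ (s' - t)) * ((∑ j ∈ Jf, ρ j ^ t) / r ^ t) := by
          rw [← Finset.mul_sum, Finset.sum_div]
      _ ≤ N * (C2 * dl ^ (s' - t)) * 1 := by
          gcongr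
          rw [div_le_one hrt]; exact hbig.le
      _ = _ := by ring
  have hBsum : ∑ b ∈ Bf, bs ν S b (6 * u b) ≤ N * (C2 * (6 ^ s' / (L - 1))) := by
    calc ∑ b ∈ Bf, bs ν S b (6 * u b) ≤ ∑ b ∈ Bf, N * (C2 * 6 ^ s') * (u b ^ t / r ^ t) := by
          refine Finset.sum_le_sum fun b hb => ?_
          have hbB : b ∈ B := hBfin.mem_toFinset.1 hb
          have hub := hupos b hbB
          have h1 := hball b (hBS hbB) (6 * u b) (by linarith [(hB1 b hbB).1])
          have hdiv : 0 < u b / r := div_pos hub hr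
          have h2 : (6 * u b / r) ^ s' ≤ 6 ^ s' * (u b ^ t / r ^ t) := by
            rw [mul_div_assoc, Real.mul_rpow (by norm_num) hdiv.le, ← Real.div_rpow hub.le hr.le]
            gcongr 6 ^ s' * ?_
            refine Real.rpow_le_rpow_of_exponent_ge hdiv ?_ (by linarith)
            rw [div_le_one hr]; exact hur b hbB
          calc bs ν S b (6 * u b) ≤ N * (C2 * (6 * u b / r) ^ s') := h1
            _ ≤ N * (C2 * (6 ^ s' * (u b ^ t / r ^ t))) := by gcongr
            _ = _ := by ring
      _ = N * (C2 * 6 ^ s') * ((∑ b ∈ Bf, u b ^ t) / r ^ t) := by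
          rw [← Finset.mul_sum, Finset.sum_div]
      _ ≤ N * (C2 * 6 ^ s') * ((r ^ t / (L - 1)) / r ^ t) := by
          gcongr
          exact hB2 Bf hBcoe.le
      _ = _ := by
          have : L - 1 ≠ 0 := by linarith
          field_simp
  have hcover : ∑ i ∈ S, ν i ≤ ∑ j ∈ Jf, ν j + ∑ b ∈ Bf, bs ν S b (6 * u b) := by
    rw [← Finset.sum_sdiff hJfS, add_comm]
    gcongr
    calc ∑ i ∈ S \ Jf, ν i ≤ ∑ i ∈ Bf.biUnion (fun b => S.filter fun y => dist y b ≤ 6 * u b), ν i := by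
          refine Finset.sum_le_sum_of_subset_of_nonneg ?_ ?_
          · intro i hi
            obtain ⟨hiS, hiJ⟩ := Finset.mem_sdiff.1 hi
            obtain ⟨b, hb, h1, -⟩ := hB3 i hiS (fun h => hiJ (hJfin.mem_toFinset.2 h))
            exact Finset.mem_biUnion.2 ⟨b, hBfin.mem_toFinset.2 hb, Finset.mem_filter.2 ⟨hiS, h1⟩⟩
          · intro i hi _
            obtain ⟨b, _, h⟩ := Finset.mem_biUnion.1 hi
            exact hν0 i (Finset.mem_filter.1 h).1
      _ ≤ _ := by
          unfold bs
          exact sum_biUnion_le_of_nonneg _ _ _ fun b _ i hi => hν0 i (Finset.mem_filter.1 hi).1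
  rw [hνs] at hcover
  have : N ≤ N * (C2 * (dl ^ (s' - t) + 6 ^ s' / (L - 1))) := by
    calc N ≤ _ := hcover
      _ ≤ _ := add_le_add hJsum hBsum
      _ = _ := by ring
  nlinarith

theorem trim_sum {X : Type*} [DecidableEq X] (g : X → ℝ) (a : ℝ) (J : Finset X)
    (h1 : ∀ j ∈ J, g j ≤ a) (h2 : a ≤ ∑ j ∈ J, g j) (ha : 0 < a) :
    ∃ J' ⊆ J, a ≤ ∑ j ∈ J', g j ∧ ∑ j ∈ J', g j ≤ 2 * a := by
  induction J using Finset.induction_on with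
  | empty => simp at h2; linarith
  | insert x J hx ih =>
    by_cases h : a ≤ ∑ j ∈ J, g j
    · obtain ⟨J', hJ', h3⟩ := ih (fun j hj => h1 j (Finset.mem_insert_of_mem hj)) h
      exact ⟨J', hJ'.trans (Finset.subset_insert _ _), h3⟩
    · refine ⟨insert x J, subset_rfl, h2, ?_⟩
      rw [Finset.sum_insert hx]
      have := h1 x (Finset.mem_insert_self _ _)
      linarith

theorem mstage_step (X : Type*) [MetricSpace X] [TopologicalSpace.SeparableSpace X] (s t : ℝ)
    (ht : 1 ≤ t) (hst : t < s) : ∃ L c0 : ℝ, 0 < L ∧ 0 < c0 ∧ c0 ≤ 1 ∧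
    ∀ (P : Set X) (Q : ℕ → Set X) (r a : ℝ), P ⊆ ⋃ i, Q i → 0 < r →
      ENNReal.ofReal (r ^ s / 4) ≤ content X s P → r ^ t / 2 ≤ a → a ≤ r ^ t →
    ∃ (ρ : X → ℝ) (α : X → ℕ) (b : X → ℝ) (J : Finset X),
      (∀ j ∈ J, 0 < ρ j ∧ ρ j ≤ r / 2 ∧
        ENNReal.ofReal (ρ j ^ s / 4) ≤ content X s (P ∩ Q (α j) ∩ Metric.closedBall j (ρ j))) ∧
      (∀ i ∈ J, ∀ j ∈ J, i ≠ j → 4 * ρ i < dist i j) ∧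
      Adm ρ t L (J : Set X) ∧ SepProp c0 (J : Set X) ∧
      (∀ j ∈ J, ρ j ^ t / 2 ≤ b j ∧ b j ≤ ρ j ^ t) ∧ ∑ j ∈ J, b j = a := by
  classical
  have hs : 0 < s := by linarith
  obtain ⟨m, hm⟩ := exists_nat_gt (max 2 (s / (s - t)))
  have hm2 : (2 : ℝ) < m := (le_max_left _ _).trans_lt hm
  have hm2' : 2 ≤ m := by exact_mod_cast hm2.le
  have hms : t < s * (1 - 1 / (m : ℝ)) := by
    have h1 : s / (s - t) < m := (le_max_right _ _).trans_lt hm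
    rw [div_lt_iff₀ (by linarith)] at h1
    have h2 : s / m < s - t := by
      rw [div_lt_iff₀ (by linarith)]; linarith
    have h3 : s * (1 - 1 / (m : ℝ)) = s - s / m := by ring
    linarith
  set c1 : ℝ := 1 / (16 * 60 ^ s) with hc1
  have hc1pos : 0 < c1 := by positivity
  set C2 : ℝ := ((2 / c1) * (8 * m) ^ s) ^ (1 - 1 / (m : ℝ)) with hC2
  have hC2pos : 0 < C2 := by positivity
  set s' := s * (1 - 1 / (m : ℝ)) with hs'
  have hst' : 0 < s' - t := by linarith
  obtain ⟨dl, hdl, hdl1, hdls⟩ : ∃ dl : ℝ, 0 < dl ∧ dl ≤ 1 / 2 ∧ C2 * dl ^ (s' - t) ≤ 1 / 4 := by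
    refine ⟨min (1 / 2) ((1 / (4 * C2)) ^ (1 / (s' - t))), by positivity, min_le_left _ _, ?_⟩
    have h1 : (min (1 / 2) ((1 / (4 * C2)) ^ (1 / (s' - t)))) ^ (s' - t) ≤ 1 / (4 * C2) := by
      calc _ ≤ ((1 / (4 * C2)) ^ (1 / (s' - t))) ^ (s' - t) := by
            gcongr
            exact min_le_right _ _
        _ = _ := by
            rw [← Real.rpow_mul (by positivity), one_div_mul_cancel hst'.ne', Real.rpow_one]
    calc _ ≤ C2 * (1 / (4 * C2)) := by gcongr
      _ = 1 / 4 := by field_simp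
  set L : ℝ := 2 + 4 * C2 * 6 ^ s' with hL
  have h6 : (0 : ℝ) < 6 ^ s' := by positivity
  have hL2 : 2 ≤ L := by rw [hL]; have : 0 < 4 * C2 * 6 ^ s' := by positivity
                         linarith
  refine ⟨L, 1 / (8 * m), by linarith, by positivity, ?_, ?_⟩
  · rw [div_le_one (by positivity)]; linarith
  intro P Q r a hPQ hr hP ha1 ha2
  have hrt : 0 < r ^ t := by positivity
  obtain ⟨ρ, α, J0, h1, h2, h3, h4⟩ := mstage_first s hs P Q hPQ (dl * r) (by positivity) r hr hP
  have hsmall : C2 * (dl ^ (s' - t) + 6 ^ s' / (L - 1)) < 1 := by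
    have : C2 * (6 ^ s' / (L - 1)) ≤ 1 / 4 := by
      rw [mul_div_assoc', div_le_iff₀ (by linarith), hL]
      linarith
    rw [mul_add]; linarith
  obtain ⟨J1, hJ1, h5, h6, h7⟩ := mstage_second s t (by linarith) hst m hm2' c1 C2 dl L hc1pos hdl
    hL2 hms hC2 hsmall r hr ρ J0 (fun j hj => ⟨(h1 j hj).1, (h1 j hj).2.1⟩) h2 h3
    (by rw [hc1]; convert h4 using 1; ring)
  have hhalf : ∀ j ∈ J0, ρ j ≤ r / 2 := by
    intro j hj
    have := (h1 j hj).2.1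
    nlinarith
  obtain ⟨J, hJ, hJa, hJb⟩ := trim_sum (fun j => ρ j ^ t) a J1 (by
    intro j hj
    refine le_trans ?_ ha1
    have hj0 := h1 j (hJ1 hj)
    calc ρ j ^ t ≤ (r / 2) ^ t := Real.rpow_le_rpow hj0.1.le (hhalf j (hJ1 hj)) (by linarith)
      _ = r ^ t / 2 ^ t := Real.div_rpow hr.le (by norm_num) t
      _ ≤ r ^ t / 2 := by
          gcongr
          calc (2 : ℝ) = 2 ^ (1 : ℝ) := by simp
            _ ≤ 2 ^ t := Real.rpow_le_rpow_of_exponent_le (by norm_num) ht)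
    (ha2.trans h7) (by linarith)
  set Sg := ∑ j ∈ J, ρ j ^ t with hSg
  have hapos : 0 < a := by linarith
  have hSgpos : 0 < Sg := by linarith
  refine ⟨ρ, α, fun j => ρ j ^ t * (a / Sg), J, ?_, ?_, ?_, ?_, ?_, ?_⟩
  · intro j hj
    have hj0 := h1 j (hJ1 (hJ hj))
    exact ⟨hj0.1, hhalf j (hJ1 (hJ hj)), hj0.2.2⟩
  · intro i hi j hj
    exact h2 i (hJ1 (hJ hi)) j (hJ1 (hJ hj))
  · exact h5.mono (by exact_mod_cast hJ)
  · exact h6.mono (by exact_mod_cast hJ)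
  · intro j hj
    have hj0 : 0 < ρ j ^ t := Real.rpow_pos_of_pos (h1 j (hJ1 (hJ hj))).1 t
    constructor
    · have hh : 1 / 2 ≤ a / Sg := by
        rw [div_le_div_iff₀ (by norm_num) hSgpos]
        linarith
      have := mul_le_mul_of_nonneg_left hh hj0.le
      simp only
      linarith
    · refine mul_le_of_le_one_right hj0.le ?_
      rw [div_le_one hSgpos]; exact hJa
  · rw [← Finset.sum_mul, ← hSg]
    field_simp

/-- An abstract tree of closed sets used to build the compact set. -/
structure TreeD (X : Type*) [MetricSpace X] (V : Type*) [DecidableEq V] (t L c0 R : ℝ) where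
  lev : ℕ → Finset V
  ch : ℕ → V → Finset V
  K : V → Set X
  x : V → X
  r : V → ℝ
  a : V → ℝ
  root : V
  lev_zero : lev 0 = {root}
  lev_succ : ∀ n, lev (n + 1) = (lev n).biUnion (ch n)
  closed : ∀ n, ∀ v ∈ lev n, IsClosed (K v)
  nonempty : ∀ n, ∀ v ∈ lev n, (K v).Nonempty
  sub_ball : ∀ n, ∀ v ∈ lev n, K v ⊆ Metric.closedBall (x v) (r v)
  r_pos : ∀ n, ∀ v ∈ lev n, 0 < r v
  r_le : ∀ n, ∀ v ∈ lev n, r v ≤ (1 / 2) ^ n * R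
  a_ge : ∀ n, ∀ v ∈ lev n, r v ^ t / 2 ≤ a v
  a_le : ∀ n, ∀ v ∈ lev n, a v ≤ r v ^ t
  ch_sub : ∀ n, ∀ v ∈ lev n, ∀ w ∈ ch n v, K w ⊆ K v
  ch_r : ∀ n, ∀ v ∈ lev n, ∀ w ∈ ch n v, r w ≤ r v / 2
  ch_sep : ∀ n, ∀ v ∈ lev n, ∀ w ∈ ch n v, ∀ w' ∈ ch n v, w ≠ w' → 4 * r w < dist (x w) (x w')
  ch_cap : ∀ n, ∀ v ∈ lev n, ∀ (y : X) (u : ℝ), 0 < u → ∀ F ⊆ ch n v,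
    (∀ w ∈ F, dist (x w) y ≤ u ∧ r w ≤ u) → ∑ w ∈ F, r w ^ t ≤ L * u ^ t
  ch_part : ∀ n, ∀ v ∈ lev n, ∀ w ∈ ch n v, ∀ w' ∈ ch n v, w ≠ w' → ∃ D ⊆ ch n v, w ∈ D ∧ w' ∉ D ∧
    ∀ p ∈ D, ∀ q ∈ ch n v, q ∉ D → c0 * dist (x w) (x w') ≤ dist (x p) (x q)
  ch_sum : ∀ n, ∀ v ∈ lev n, ∑ w ∈ ch n v, a w = a v

namespace TreeD

variable {X : Type*} [MetricSpace X] {V : Type*} [DecidableEq V] {t L c0 R : ℝ}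

/-- The limit set. -/
def B (T : TreeD X V t L c0 R) : Set X := ⋂ n, ⋃ v ∈ T.lev n, T.K v

theorem a_pos (T : TreeD X V t L c0 R) {n : ℕ} {v : V} (hv : v ∈ T.lev n) : 0 < T.a v := by
  have h1 := T.a_ge n v hv
  have h2 := Real.rpow_pos_of_pos (T.r_pos n v hv) t
  linarith

theorem ch_mem (T : TreeD X V t L c0 R) {n : ℕ} {v w : V} (hv : v ∈ T.lev n) (hw : w ∈ T.ch n v) :
    w ∈ T.lev (n + 1) := by
  rw [T.lev_succ]; exact Finset.mem_biUnion.2 ⟨v, hv, hw⟩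

/-- Comparison of distances between points and between centres of siblings. -/
theorem sib_dist (T : TreeD X V t L c0 R) {n : ℕ} {v w w' : V} (hv : v ∈ T.lev n)
    (hw : w ∈ T.ch n v) (hw' : w' ∈ T.ch n v) (hne : w ≠ w') {p p' : X} (hp : p ∈ T.K w)
    (hp' : p' ∈ T.K w') : dist (T.x w) (T.x w') / 2 ≤ dist p p' ∧
      dist p p' ≤ 3 / 2 * dist (T.x w) (T.x w') := by
  have h1 := T.ch_sep n v hv w hw w' hw' hne
  have h2 := T.ch_sep n v hv w' hw' w hw hne.symm
  rw [dist_comm] at h2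
  have h3 := T.sub_ball _ w (T.ch_mem hv hw) hp
  have h4 := T.sub_ball _ w' (T.ch_mem hv hw') hp'
  rw [Metric.mem_closedBall] at h3 h4
  have h5 := dist_triangle4 (T.x w) p p' (T.x w')
  rw [dist_comm (T.x w) p] at h5
  have h6 := dist_triangle4 p (T.x w) (T.x w') p'
  rw [dist_comm (T.x w') p'] at h6
  constructor <;> linarith

theorem sep (T : TreeD X V t L c0 R) (n : ℕ) : ∀ v ∈ T.lev n, ∀ v' ∈ T.lev n, v ≠ v' →
    ∀ p ∈ T.K v, ∀ p' ∈ T.K v', 2 * T.r v ≤ dist p p' := by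
  induction n with
  | zero =>
    intro v hv v' hv' hne
    rw [T.lev_zero, Finset.mem_singleton] at hv hv'
    exact absurd (hv.trans hv'.symm) hne
  | succ n ih =>
    intro w hw w' hw' hne p hp p' hp'
    have hw2 := hw
    have hw2' := hw'
    rw [T.lev_succ, Finset.mem_biUnion] at hw hw'
    obtain ⟨v, hv, hw⟩ := hw
    obtain ⟨v', hv', hw'⟩ := hw'
    by_cases h : v = v'
    · subst h
      have h1 := (T.sib_dist hv hw hw' hne hp hp').1
      have h2 := T.ch_sep n v hv w hw w' hw' hne
      linarith
    · have h1 := ih v hv v' hv' h p (T.ch_sub n v hv w hw hp) p' (T.ch_sub n v' hv' w' hw' hp')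
      have h2 := T.ch_r n v hv w hw
      have h3 := T.r_pos _ w hw2
      linarith

theorem uniq (T : TreeD X V t L c0 R) {n : ℕ} {v v' : V} (hv : v ∈ T.lev n) (hv' : v' ∈ T.lev n)
    {p : X} (hp : p ∈ T.K v) (hp' : p ∈ T.K v') : v = v' := by
  by_contra h
  have h1 := T.sep n v hv v' hv' h p hp p hp'
  have h2 := T.r_pos n v hv
  rw [dist_self] at h1
  linarith

theorem exists_node (T : TreeD X V t L c0 R) : ∃ nd : ℕ → X → V, ∀ n, ∀ y ∈ T.B,
    nd n y ∈ T.lev n ∧ y ∈ T.K (nd n y) := by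
  have hex : ∀ n y, y ∈ T.B → ∃ v, v ∈ T.lev n ∧ y ∈ T.K v := by
    intro n y hy
    obtain ⟨v, hv, h⟩ := mem_iUnion₂.1 (mem_iInter.1 hy n)
    exact ⟨v, hv, h⟩
  have : Nonempty V := ⟨T.root⟩
  choose! nd h using hex
  exact ⟨nd, fun n y hy => h n y hy⟩

/-- The node of level `n` containing a point of the limit set. -/
noncomputable def nd (T : TreeD X V t L c0 R) : ℕ → X → V := T.exists_node.choose

theorem nd_mem (T : TreeD X V t L c0 R) (n : ℕ) {y : X} (hy : y ∈ T.B) : T.nd n y ∈ T.lev n :=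
  (T.exists_node.choose_spec n y hy).1

theorem nd_K (T : TreeD X V t L c0 R) (n : ℕ) {y : X} (hy : y ∈ T.B) : y ∈ T.K (T.nd n y) :=
  (T.exists_node.choose_spec n y hy).2

theorem nd_eq (T : TreeD X V t L c0 R) {n : ℕ} {y : X} (hy : y ∈ T.B) {v : V} (hv : v ∈ T.lev n)
    (h : y ∈ T.K v) : T.nd n y = v :=
  T.uniq (T.nd_mem n hy) hv (T.nd_K n hy) h

theorem nd_ch (T : TreeD X V t L c0 R) (n : ℕ) {y : X} (hy : y ∈ T.B) :
    T.nd (n + 1) y ∈ T.ch n (T.nd n y) := by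
  have h := T.nd_mem (n + 1) hy
  rw [T.lev_succ, Finset.mem_biUnion] at h
  obtain ⟨v, hv, h⟩ := h
  have := T.nd_eq hy hv (T.ch_sub n v hv _ h (T.nd_K (n + 1) hy))
  rwa [this]

theorem nd_of_ch (T : TreeD X V t L c0 R) {n : ℕ} {y : X} (hy : y ∈ T.B) {v : V}
    (hv : v ∈ T.lev n) (h : T.nd (n + 1) y ∈ T.ch n v) : T.nd n y = v :=
  T.nd_eq hy hv (T.ch_sub n v hv _ h (T.nd_K (n + 1) hy))

theorem dist_le (T : TreeD X V t L c0 R) {n : ℕ} {v : V} (hv : v ∈ T.lev n) {p q : X}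
    (hp : p ∈ T.K v) (hq : q ∈ T.K v) : dist p q ≤ 2 * T.r v := by
  have h3 := T.sub_ball _ v hv hp
  have h4 := T.sub_ball _ v hv hq
  rw [Metric.mem_closedBall] at h3 h4
  have := dist_triangle_right p q (T.x v)
  linarith

theorem exists_small (R : ℝ) {e : ℝ} (he : 0 < e) : ∃ n : ℕ, (1 / 2) ^ n * R < e := by
  obtain ⟨n, hn⟩ := exists_pow_lt_of_lt_one (show 0 < e / (|R| + 1) by positivity)
    (show (1 / 2 : ℝ) < 1 by norm_num)
  refine ⟨n, ?_⟩
  rw [lt_div_iff₀ (by positivity)] at hn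
  have : (0 : ℝ) < (1 / 2) ^ n := by positivity
  nlinarith [le_abs_self R]

theorem sepProp (T : TreeD X V t L c0 R) (hc0 : 0 < c0) (hc01 : c0 ≤ 1) :
    SepProp (c0 / 3) T.B := by
  classical
  intro y hy z hz hyz
  have hex : ∃ n, T.nd n y ≠ T.nd n z := by
    by_contra! h
    obtain ⟨n, hn⟩ := exists_small R (show 0 < dist y z / 2 by have := dist_pos.2 hyz; positivity)
    have h1 := T.dist_le (T.nd_mem n hy) (T.nd_K n hy) (by rw [h n]; exact T.nd_K n hz)
    have h2 := T.r_le n _ (T.nd_mem n hy)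
    linarith
  obtain ⟨k, hk⟩ : ∃ k, Nat.find hex = k + 1 := by
    apply Nat.exists_eq_succ_of_ne_zero
    intro h0
    have h1 := Nat.find_spec hex
    rw [h0] at h1
    have h2 := T.nd_mem 0 hy
    have h3 := T.nd_mem 0 hz
    rw [T.lev_zero, Finset.mem_singleton] at h2 h3
    exact h1 (h2.trans h3.symm)
  have hne : T.nd (k + 1) y ≠ T.nd (k + 1) z := by
    have := Nat.find_spec hex; rwa [hk] at this
  have heq : T.nd k y = T.nd k z := by
    have := Nat.find_min hex (m := k) (by omega)
    exact not_not.1 this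
  set v := T.nd k y with hv
  have hvl : v ∈ T.lev k := T.nd_mem k hy
  have hw := T.nd_ch k hy
  have hw' := T.nd_ch k hz
  rw [← hv] at hw
  rw [← heq] at hw'
  obtain ⟨D, hD, h1, h2, h3⟩ := T.ch_part k v hvl _ hw _ hw' hne
  refine ⟨{p ∈ T.B | T.nd (k + 1) p ∈ D}, fun p hp => hp.1, ⟨hy, h1⟩, fun h => h2 h.2, ?_⟩
  rintro a ⟨ha, haD⟩ b hb hbC
  have hbD : T.nd (k + 1) b ∉ D := fun h => hbC ⟨hb, h⟩
  have hav : T.nd k a = v := T.nd_of_ch ha hvl (hD haD)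
  have hyz0 := dist_nonneg (x := y) (y := z)
  by_cases hbv : T.nd k b = v
  · have hbch := T.nd_ch k hb
    rw [hbv] at hbch
    have h4 := h3 _ haD _ hbch hbD
    have h5 := (T.sib_dist hvl hw hw' hne (T.nd_K _ hy) (T.nd_K _ hz)).2
    have h6 := (T.sib_dist hvl (hD haD) hbch (fun h => hbD (h ▸ haD)) (T.nd_K _ ha) (T.nd_K _ hb)).1
    have := mul_le_mul_of_nonneg_left h5 hc0.le
    linarith
  · have h4 := T.sep k v hvl _ (T.nd_mem k hb) (Ne.symm hbv) a (hav ▸ T.nd_K k ha) b (T.nd_K k hb)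
    have h5 := T.dist_le hvl (T.nd_K k hy) (show z ∈ T.K v by rw [heq]; exact T.nd_K k hz)
    nlinarith

theorem isClosed_B (T : TreeD X V t L c0 R) : IsClosed T.B :=
  isClosed_iInter fun n => (T.lev n).finite_toSet.isClosed_biUnion fun v hv => T.closed n v hv

theorem isCompact_B [CompleteSpace X] (T : TreeD X V t L c0 R) : IsCompact T.B := by
  refine TotallyBounded.isCompact_of_isClosed ?_ T.isClosed_B
  rw [Metric.totallyBounded_iff]
  intro e he
  obtain ⟨n, hn⟩ := exists_small R he
  refine ⟨T.x '' (T.lev n), (T.lev n).finite_toSet.image _, ?_⟩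
  intro y hy
  refine mem_iUnion₂.2 ⟨_, mem_image_of_mem _ (T.nd_mem n hy), ?_⟩
  have h1 := T.sub_ball _ _ (T.nd_mem n hy) (T.nd_K n hy)
  rw [Metric.mem_closedBall] at h1
  rw [Metric.mem_ball]
  exact h1.trans_lt ((T.r_le n _ (T.nd_mem n hy)).trans_lt hn)

theorem ch_nonempty (T : TreeD X V t L c0 R) {n : ℕ} {v : V} (hv : v ∈ T.lev n) :
    (T.ch n v).Nonempty := by
  by_contra h
  rw [Finset.not_nonempty_iff_eq_empty] at h
  have h1 := T.ch_sum n v hv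
  rw [h, Finset.sum_empty] at h1
  exact absurd h1 (T.a_pos hv).ne

/-- Every node meets the limit set. -/
theorem meets [CompleteSpace X] (T : TreeD X V t L c0 R) {n : ℕ} {v : V} (hv : v ∈ T.lev n) :
    (T.K v ∩ T.B).Nonempty := by
  classical
  have hex : ∀ (m : ℕ) (w : V), w ∈ T.lev m → ∃ w', w' ∈ T.ch m w := fun m w hw => T.ch_nonempty hw
  have : Nonempty V := ⟨T.root⟩
  choose! nx hnx using hex
  let path : ℕ → V := fun i => Nat.rec v (fun i w => nx (n + i) w) i
  have hp0 : path 0 = v := rfl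
  have hps : ∀ i, path (i + 1) = nx (n + i) (path i) := fun i => rfl
  have hpm : ∀ i, path i ∈ T.lev (n + i) := by
    intro i
    induction i with
    | zero => exact hv
    | succ i ih => rw [hps]; exact T.ch_mem ih (hnx _ _ ih)
  have hsub : ∀ i, T.K (path (i + 1)) ⊆ T.K (path i) := fun i => by
    rw [hps]; exact T.ch_sub _ _ (hpm i) _ (hnx _ _ (hpm i))
  have hanti : Antitone fun i => T.K (path i) := antitone_nat_of_succ_le hsub
  choose p hp using fun i => T.nonempty _ _ (hpm i)
  have hcau : CauchySeq p := by
    rw [Metric.cauchySeq_iff']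
    intro e he
    obtain ⟨N, hN⟩ := exists_small R (half_pos he)
    refine ⟨N, fun i hi => ?_⟩
    have h1 := T.dist_le (hpm N) (hanti hi (hp i)) (hp N)
    have h2 := T.r_le _ _ (hpm N)
    have h3 : (1 / 2 : ℝ) ^ (n + N) * R ≤ (1 / 2) ^ N * R := by
      have hR : 0 < R := by
        have h4 := T.r_pos _ _ (hpm N)
        have h5 : (0 : ℝ) < (1 / 2) ^ (n + N) := by positivity
        by_contra h6
        nlinarith
      exact mul_le_mul_of_nonneg_right
        (pow_le_pow_of_le_one (by norm_num) (by norm_num) (by omega)) hR.le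
    linarith
  obtain ⟨y, hy⟩ := cauchySeq_tendsto_of_complete hcau
  have hyK : ∀ i, y ∈ T.K (path i) := fun i =>
    (T.closed _ _ (hpm i)).mem_of_tendsto hy
      (Filter.eventually_atTop.2 ⟨i, fun j hj => hanti hj (hp j)⟩)
  have hbelow : ∀ j (w : V), w ∈ T.lev j → y ∈ T.K w → ∀ i ≤ j, ∃ w' ∈ T.lev i, y ∈ T.K w' := by
    intro j
    induction j with
    | zero =>
      intro w hw hyw i hi
      obtain rfl : i = 0 := by omega
      exact ⟨w, hw, hyw⟩
    | succ j ih =>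
      intro w hw hyw i hi
      rcases Nat.lt_or_ge j i with h | h
      · obtain rfl : i = j + 1 := by omega
        exact ⟨w, hw, hyw⟩
      · rw [T.lev_succ, Finset.mem_biUnion] at hw
        obtain ⟨w', hw', hw⟩ := hw
        exact ih w' hw' (T.ch_sub _ _ hw' _ hw hyw) i h
  refine ⟨y, hyK 0, mem_iInter.2 fun i => ?_⟩
  obtain ⟨w', h1, h2⟩ := hbelow (n + i) (path i) (hpm i) (hyK i) i (by omega)
  exact mem_iUnion₂.2 ⟨w', h1, h2⟩

theorem sum_lev (T : TreeD X V t L c0 R) (n : ℕ) : ∑ v ∈ T.lev n, T.a v = T.a T.root := by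
  induction n with
  | zero => rw [T.lev_zero, Finset.sum_singleton]
  | succ n ih =>
    rw [T.lev_succ, Finset.sum_biUnion, Finset.sum_congr rfl (fun v hv => T.ch_sum n v hv), ih]
    intro v hv v' hv' hne
    rw [Function.onFun, Finset.disjoint_left]
    intro w hw hw'
    obtain ⟨p, hp⟩ := T.nonempty _ w (T.ch_mem hv hw)
    exact hne (T.uniq hv hv' (T.ch_sub n v hv w hw hp) (T.ch_sub n v' hv' w hw' hp))

end TreeD

theorem content_le_hausdorff {X : Type*} [MetricSpace X] [MeasurableSpace X]
    [BorelSpace X] (s : ℝ) (A : Set X) : content X s A ≤ μH[s] A := by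
  rw [Measure.hausdorffMeasure_apply]
  refine le_trans ?_ (le_iSup₂ (α := ℝ≥0∞) (⊤ : ℝ≥0∞) ENNReal.zero_lt_top)
  refine le_iInf fun t => le_iInf fun ht => le_iInf fun _ => ?_
  unfold content
  rw [OuterMeasure.ofFunction_apply]
  exact iInf₂_le t ht

namespace TreeD

variable {X : Type*} [MetricSpace X] {V : Type*} [DecidableEq V] {t L c0 R : ℝ}

theorem hausdorff_lt_top [MeasurableSpace X] [BorelSpace X] (T : TreeD X V t L c0 R) (ht : 0 < t) :
    μH[t] T.B < ⊤ := by
  have h := Measure.hausdorffMeasure_le_liminf_sum (ι := fun n => ↥(T.lev n)) t T.B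
    (l := Filter.atTop) (fun n => ENNReal.ofReal (2 * ((1 / 2) ^ n * R))) ?_
    (fun n v => T.K v) ?_ ?_
  · refine h.trans_lt ?_
    have hb : ∀ n, ∑ i : ↥(T.lev n), Metric.ediam (T.K i) ^ t ≤
        ENNReal.ofReal (2 ^ t * (2 * T.a T.root)) := by
      intro n
      calc ∑ i : ↥(T.lev n), Metric.ediam (T.K i) ^ t
          ≤ ∑ i : ↥(T.lev n), ENNReal.ofReal (2 ^ t * (2 * T.a i)) := by
            refine Finset.sum_le_sum fun i _ => ?_
            have hi := i.2
            have hr := T.r_pos n i hi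
            calc Metric.ediam (T.K i) ^ t ≤ ENNReal.ofReal (2 * T.r i) ^ t := by
                  refine ENNReal.rpow_le_rpow ?_ ht.le
                  refine Metric.ediam_le fun p hp q hq => ?_
                  rw [edist_dist]
                  exact ENNReal.ofReal_le_ofReal (T.dist_le hi hp hq)
              _ = ENNReal.ofReal ((2 * T.r i) ^ t) :=
                  ENNReal.ofReal_rpow_of_nonneg (by positivity) ht.le
              _ ≤ _ := by
                  refine ENNReal.ofReal_le_ofReal ?_
                  rw [Real.mul_rpow (by norm_num) hr.le]
                  have := T.a_ge n i hi
                  have h2 : (0 : ℝ) < 2 ^ t := by positivity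
                  exact mul_le_mul_of_nonneg_left (by linarith) h2.le
        _ = ENNReal.ofReal (2 ^ t * (2 * T.a T.root)) := by
            rw [← ENNReal.ofReal_sum_of_nonneg]
            · congr 1
              rw [← Finset.mul_sum, ← Finset.mul_sum, ← T.sum_lev n]
              congr 2
              exact Finset.sum_coe_sort (T.lev n) T.a
            · intro i _
              have := T.a_pos i.2
              positivity
    calc _ ≤ Filter.liminf (fun n : ℕ => ENNReal.ofReal (2 ^ t * (2 * T.a T.root))) Filter.atTop :=
          Filter.liminf_le_liminf (Filter.Eventually.of_forall hb)
      _ = ENNReal.ofReal (2 ^ t * (2 * T.a T.root)) := by simp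
      _ < ⊤ := ENNReal.ofReal_lt_top
  · have h1 : Filter.Tendsto (fun n : ℕ => 2 * ((1 / 2 : ℝ) ^ n * R)) Filter.atTop (nhds 0) := by
      have := ((tendsto_pow_atTop_nhds_zero_of_lt_one (r := (1 / 2 : ℝ)) (by norm_num)
        (by norm_num)).mul_const R).const_mul 2
      simpa using this
    have := ENNReal.tendsto_ofReal h1
    simpa using this
  · refine Filter.Eventually.of_forall fun n i => Metric.ediam_le fun p hp q hq => ?_
    rw [edist_dist]
    refine ENNReal.ofReal_le_ofReal ((T.dist_le i.2 hp hq).trans ?_)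
    have := T.r_le n i i.2
    linarith
  · refine Filter.Eventually.of_forall fun n y hy => ?_
    exact mem_iUnion.2 ⟨⟨_, T.nd_mem n hy⟩, T.nd_K n hy⟩

open Classical in
/-- Nodes of level `n` that meet `U`. -/
noncomputable def touch (T : TreeD X V t L c0 R) (n : ℕ) (U : Set X) : Finset V :=
  (T.lev n).filter fun v => ∃ p ∈ T.B, p ∈ U ∧ T.nd n p = v

theorem mem_touch (T : TreeD X V t L c0 R) {n : ℕ} {U : Set X} {v : V} :
    v ∈ T.touch n U ↔ v ∈ T.lev n ∧ ∃ p ∈ T.B, p ∈ U ∧ T.nd n p = v := by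
  classical
  simp [touch]

/-- Mass of the nodes of level `n` that meet `U`. -/
noncomputable def mass (T : TreeD X V t L c0 R) (U : Set X) (n : ℕ) : ℝ :=
  ∑ v ∈ T.touch n U, T.a v

theorem mass_anti (T : TreeD X V t L c0 R) (U : Set X) : Antitone (T.mass U) := by
  refine antitone_nat_of_succ_le fun n => ?_
  have hsub : T.touch (n + 1) U ⊆ (T.touch n U).biUnion (T.ch n) := by
    intro w hw
    obtain ⟨_, p, hp, hpU, rfl⟩ := T.mem_touch.1 hw
    exact Finset.mem_biUnion.2 ⟨T.nd n p, T.mem_touch.2 ⟨T.nd_mem n hp, p, hp, hpU, rfl⟩,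
      T.nd_ch n hp⟩
  have hpos : ∀ v ∈ T.touch n U, ∀ w ∈ T.ch n v, 0 ≤ T.a w := fun v hv w hw =>
    (T.a_pos (T.ch_mem (T.mem_touch.1 hv).1 hw)).le
  calc T.mass U (n + 1) ≤ ∑ w ∈ (T.touch n U).biUnion (T.ch n), T.a w := by
        refine Finset.sum_le_sum_of_subset_of_nonneg hsub fun w hw _ => ?_
        obtain ⟨v, hv, hw⟩ := Finset.mem_biUnion.1 hw
        exact hpos v hv w hw
    _ ≤ ∑ v ∈ T.touch n U, ∑ w ∈ T.ch n v, T.a w := sum_biUnion_le_of_nonneg _ _ _ hpos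
    _ = T.mass U n := Finset.sum_congr rfl fun v hv => T.ch_sum n v (T.mem_touch.1 hv).1

theorem mass_small (T : TreeD X V t L c0 R) (ht : 0 < t) (hL : 0 < L) (U : Set X) (u : ℝ)
    (hu : 0 < u) (hU : ∀ p ∈ U, ∀ q ∈ U, dist p q ≤ u) :
    ∃ n, T.mass U n ≤ (1 + L * 2 ^ t) * u ^ t := by
  classical
  have hut : 0 < u ^ t := Real.rpow_pos_of_pos hu t
  have h2t : (0 : ℝ) < 2 ^ t := by positivity
  by_cases hex : ∃ n, ∃ y ∈ T.B, ∃ z ∈ T.B, y ∈ U ∧ z ∈ U ∧ T.nd n y ≠ T.nd n z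
  · obtain ⟨k, hk⟩ : ∃ k, Nat.find hex = k + 1 := by
      apply Nat.exists_eq_succ_of_ne_zero
      intro h0
      obtain ⟨y, hy, z, hz, -, -, h1⟩ := Nat.find_spec hex
      rw [h0] at h1
      have h2 := T.nd_mem 0 hy
      have h3 := T.nd_mem 0 hz
      rw [T.lev_zero, Finset.mem_singleton] at h2 h3
      exact h1 (h2.trans h3.symm)
    obtain ⟨y, hy, z, hz, hyU, hzU, hne⟩ := Nat.find_spec hex
    rw [hk] at hne
    have hmin : ∀ p ∈ T.B, p ∈ U → T.nd k p = T.nd k y := by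
      intro p hp hpU
      by_contra h
      exact Nat.find_min hex (m := k) (by omega) ⟨p, hp, y, hy, hpU, hyU, h⟩
    have hv := T.nd_mem k hy
    have hch : ∀ p ∈ T.B, p ∈ U → T.nd (k + 1) p ∈ T.ch k (T.nd k y) := fun p hp hpU => by
      rw [← hmin p hp hpU]; exact T.nd_ch k hp
    have hd : ∀ p ∈ T.B, p ∈ U → ∀ q ∈ T.B, q ∈ U → T.nd (k + 1) p ≠ T.nd (k + 1) q →
        dist (T.x (T.nd (k + 1) p)) (T.x (T.nd (k + 1) q)) ≤ 2 * u ∧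
        T.r (T.nd (k + 1) p) ≤ 2 * u := by
      intro p hp hpU q hq hqU hpq
      have h1 := (T.sib_dist hv (hch p hp hpU) (hch q hq hqU) hpq (T.nd_K _ hp) (T.nd_K _ hq)).1
      have h2 := hU p hpU q hqU
      have h3 := T.ch_sep k _ hv _ (hch p hp hpU) _ (hch q hq hqU) hpq
      constructor <;> linarith
    refine ⟨k + 1, ?_⟩
    have hcap := T.ch_cap k _ hv (T.x (T.nd (k + 1) y)) (2 * u) (by positivity)
      (T.touch (k + 1) U) (fun w hw => by
        obtain ⟨_, p, hp, hpU, rfl⟩ := T.mem_touch.1 hw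
        exact hch p hp hpU) (fun w hw => by
        obtain ⟨_, p, hp, hpU, rfl⟩ := T.mem_touch.1 hw
        by_cases h : T.nd (k + 1) p = T.nd (k + 1) y
        · rw [h, dist_self]
          exact ⟨by positivity, (hd y hy hyU z hz hzU hne).2⟩
        · exact hd p hp hpU y hy hyU h)
    rw [Real.mul_rpow (by norm_num) hu.le] at hcap
    calc T.mass U (k + 1) ≤ ∑ w ∈ T.touch (k + 1) U, T.r w ^ t :=
          Finset.sum_le_sum fun w hw => T.a_le _ w (T.mem_touch.1 hw).1
      _ ≤ _ := hcap
      _ ≤ _ := by nlinarith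
  · push Not at hex
    obtain ⟨n, hn⟩ := exists_small R hu
    refine ⟨n, ?_⟩
    have hbig : u ^ t ≤ (1 + L * 2 ^ t) * u ^ t := by
      have : 0 < L * 2 ^ t := by positivity
      nlinarith
    refine le_trans ?_ hbig
    unfold mass
    rcases (T.touch n U).eq_empty_or_nonempty with h | ⟨v, hv⟩
    · rw [h, Finset.sum_empty]; exact hut.le
    · have : T.touch n U = {v} := by
        refine Finset.eq_singleton_iff_unique_mem.2 ⟨hv, fun w hw => ?_⟩
        obtain ⟨_, p, hp, hpU, rfl⟩ := T.mem_touch.1 hw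
        obtain ⟨_, q, hq, hqU, rfl⟩ := T.mem_touch.1 hv
        exact hex n p hp q hq hpU hqU
      rw [this, Finset.sum_singleton]
      have hvl := (T.mem_touch.1 hv).1
      refine (T.a_le n v hvl).trans ?_
      exact Real.rpow_le_rpow (T.r_pos n v hvl).le ((T.r_le n v hvl).trans hn.le) ht.le

theorem content_pos [CompleteSpace X] (T : TreeD X V t L c0 R) (ht : 0 < t) (hL : 0 < L) :
    content X t T.B ≠ 0 := by
  classical
  intro h0
  have hroot : T.root ∈ T.lev 0 := by rw [T.lev_zero]; exact Finset.mem_singleton_self _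
  have ha := T.a_pos hroot
  set C := 1 + L * 2 ^ t with hC
  have hCpos : 0 < C := by positivity
  set ε := T.a T.root / (4 * C) with hε
  have hεpos : 0 < ε := by positivity
  obtain ⟨U, hBU, hsum⟩ := exists_cover_of_content_lt t T.B (ENNReal.ofReal ε)
    (by rw [h0]; exact ENNReal.ofReal_pos.2 hεpos)
  set e : ℕ → ℝ≥0∞ := fun n => ⨆ _ : (U n).Nonempty, Metric.ediam (U n) ^ t with he
  have hefin : ∀ n, e n ≠ ⊤ := fun n =>
    ((ENNReal.le_tsum n).trans_lt (hsum.trans ENNReal.ofReal_lt_top)).ne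
  have hesum : ∀ F : Finset ℕ, ∑ i ∈ F, (e i).toReal ≤ ε := by
    intro F
    rw [← ENNReal.toReal_sum fun i _ => hefin i]
    refine ENNReal.toReal_le_of_le_ofReal hεpos.le ?_
    exact (ENNReal.sum_le_tsum F).trans hsum.le
  set g : ℕ → ℝ := fun i => (e i).toReal + ε * (1 / 2) ^ (i + 1) with hg
  have hgpos : ∀ i, 0 < g i := fun i => by
    have : 0 ≤ (e i).toReal := ENNReal.toReal_nonneg
    positivity
  have hgsum : ∀ F : Finset ℕ, ∑ i ∈ F, g i ≤ 2 * ε := by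
    intro F
    have h1 : ∑ i ∈ F, ε * (1 / 2) ^ (i + 1) ≤ ε := by
      have hs : HasSum (fun i : ℕ => ε * (1 / 2 : ℝ) ^ (i + 1)) ε := by
        have := (hasSum_geometric_two' ε)
        convert this using 1
        ext i
        rw [div_div, one_div, inv_pow, pow_succ]
        field_simp
      exact sum_le_hasSum F (fun i _ => by positivity) hs
    have h2 := hesum F
    rw [Finset.sum_add_distrib]
    linarith
  set u : ℕ → ℝ := fun i => g i ^ (1 / t) with hu
  have hupos : ∀ i, 0 < u i := fun i => Real.rpow_pos_of_pos (hgpos i) _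
  have hut : ∀ i, u i ^ t = g i := fun i => by
    rw [hu]; simp only
    rw [← Real.rpow_mul (hgpos i).le, one_div, inv_mul_cancel₀ ht.ne', Real.rpow_one]
  have hdiam : ∀ i, ∃ η > 0, ∀ p ∈ U i, ∀ q ∈ U i, dist p q + 2 * η ≤ u i := by
    intro i
    have hlt : (e i).toReal ^ (1 / t) < u i := by
      apply Real.rpow_lt_rpow ENNReal.toReal_nonneg _ (by positivity)
      have : 0 < ε * (1 / 2) ^ (i + 1) := by positivity
      simp only [hg]; linarith
    refine ⟨(u i - (e i).toReal ^ (1 / t)) / 2, by linarith, fun p hp q hq => ?_⟩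
    have h1 : edist p q ^ t ≤ e i := by
      refine le_trans ?_ (le_iSup (fun _ : (U i).Nonempty => Metric.ediam (U i) ^ t) ⟨p, hp⟩)
      exact ENNReal.rpow_le_rpow (Metric.edist_le_ediam_of_mem hp hq) ht.le
    have h2 : dist p q ^ t ≤ (e i).toReal := by
      rw [edist_dist, ENNReal.ofReal_rpow_of_nonneg dist_nonneg ht.le] at h1
      exact (ENNReal.ofReal_le_iff_le_toReal (hefin i)).1 h1
    have h3 : dist p q ≤ (e i).toReal ^ (1 / t) := by
      have := Real.rpow_le_rpow (by positivity) h2 (show 0 ≤ 1 / t by positivity)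
      rwa [← Real.rpow_mul dist_nonneg, mul_one_div_cancel ht.ne', Real.rpow_one] at this
    linarith
  choose η hη hηU using hdiam
  set W : ℕ → Set X := fun i => Metric.thickening (η i) (U i) with hW
  have hWd : ∀ i, ∀ p ∈ W i, ∀ q ∈ W i, dist p q ≤ u i := by
    intro i p hp q hq
    obtain ⟨p', hp', hpp⟩ := Metric.mem_thickening_iff.1 hp
    obtain ⟨q', hq', hqq⟩ := Metric.mem_thickening_iff.1 hq
    have := hηU i p' hp' q' hq'
    have h2 := dist_triangle4_right p q p' q'
    linarith
  obtain ⟨F, hF⟩ := T.isCompact_B.elim_finite_subcover W (fun i => Metric.isOpen_thickening)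
    (hBU.trans (iUnion_mono fun i => Metric.self_subset_thickening (hη i) _))
  choose n hn using fun i => T.mass_small ht hL (W i) (u i) (hupos i) (hWd i)
  set N := F.sup n with hN
  have hmass : ∀ i ∈ F, T.mass (W i) N ≤ C * g i := fun i hi => by
    rw [← hut i]
    exact (T.mass_anti _ (Finset.le_sup hi)).trans (hn i)
  have hcov : T.lev N ⊆ F.biUnion fun i => T.touch N (W i) := by
    intro v hv
    obtain ⟨p, hpv, hp⟩ := T.meets hv
    obtain ⟨i, hi, hpi⟩ := mem_iUnion₂.1 (hF hp)
    exact Finset.mem_biUnion.2 ⟨i, hi, T.mem_touch.2 ⟨hv, p, hp, hpi, T.nd_eq hp hv hpv⟩⟩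
  have hnn : ∀ i ∈ F, ∀ v ∈ T.touch N (W i), 0 ≤ T.a v := fun i _ v hv =>
    (T.a_pos (T.mem_touch.1 hv).1).le
  have hfin : T.a T.root ≤ C * (2 * ε) := by
    calc T.a T.root = ∑ v ∈ T.lev N, T.a v := (T.sum_lev N).symm
      _ ≤ ∑ v ∈ F.biUnion fun i => T.touch N (W i), T.a v := by
          refine Finset.sum_le_sum_of_subset_of_nonneg hcov fun v hv _ => ?_
          obtain ⟨i, hi, hv⟩ := Finset.mem_biUnion.1 hv
          exact hnn i hi v hv
      _ ≤ ∑ i ∈ F, ∑ v ∈ T.touch N (W i), T.a v := sum_biUnion_le_of_nonneg _ _ _ hnn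
      _ ≤ ∑ i ∈ F, C * g i := Finset.sum_le_sum hmass
      _ = C * ∑ i ∈ F, g i := by rw [Finset.mul_sum]
      _ ≤ C * (2 * ε) := mul_le_mul_of_nonneg_left (hgsum F) hCpos.le
  have : C * (2 * ε) = T.a T.root / 2 := by rw [hε]; field_simp; ring
  linarith

theorem hausdorff_pos [CompleteSpace X] [MeasurableSpace X] [BorelSpace X]
    (T : TreeD X V t L c0 R) (ht : 0 < t) (hL : 0 < L) : 0 < μH[t] T.B :=
  (pos_iff_ne_zero.2 (T.content_pos ht hL)).trans_le (content_le_hausdorff t T.B)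

end TreeD

/-- Finite-stage data of the construction. -/
structure Node (X : Type*) where
  σ : ℕ → ℕ
  P : Set X
  x : X
  r : ℝ
  a : ℝ

/-- Cylinders in Baire space. -/
def cyl (σ : ℕ → ℕ) (n : ℕ) : Set (ℕ → ℕ) := {τ | ∀ i < n, τ i = σ i}

/-- Good nodes of level `n`. -/
structure Node.Good {X : Type*} [MetricSpace X] (f : (ℕ → ℕ) → X) (s t R : ℝ) (n : ℕ)
    (v : Node X) : Prop where
  sub : v.P ⊆ f '' cyl v.σ n
  ball : v.P ⊆ Metric.closedBall v.x v.r
  r_pos : 0 < v.r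
  r_le : v.r ≤ (1 / 2) ^ n * R
  heavy : ENNReal.ofReal (v.r ^ s / 4) ≤ content X s v.P
  a_ge : v.r ^ t / 2 ≤ v.a
  a_le : v.a ≤ v.r ^ t

theorem Node.Good.nonempty {X : Type*} [MetricSpace X] {f : (ℕ → ℕ) → X} {s t R : ℝ} {n : ℕ}
    {v : Node X} (h : v.Good f s t R n) : v.P.Nonempty := by
  by_contra h0
  rw [not_nonempty_iff_eq_empty] at h0
  have h1 := h.heavy
  rw [h0, measure_empty, nonpos_iff_eq_zero, ENNReal.ofReal_eq_zero] at h1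
  have := Real.rpow_pos_of_pos h.r_pos s
  linarith

theorem children_exist (X : Type*) [MetricSpace X] [TopologicalSpace.SeparableSpace X]
    (s t : ℝ) (ht : 1 ≤ t) (hst : t < s) :
    ∃ L c0 : ℝ, 0 < L ∧ 0 < c0 ∧ c0 ≤ 1 ∧ ∀ (f : (ℕ → ℕ) → X) (R : ℝ) (n : ℕ) (v : Node X),
      v.Good f s t R n → ∃ Ch : Finset (Node X),
        (∀ w ∈ Ch, w.Good f s t R (n + 1) ∧ w.P ⊆ v.P ∧ w.r ≤ v.r / 2 ∧ ∀ i < n, w.σ i = v.σ i) ∧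
        (∀ w ∈ Ch, ∀ w' ∈ Ch, w ≠ w' → 4 * w.r < dist w.x w'.x) ∧
        (∀ (y : X) (u : ℝ), 0 < u → ∀ F ⊆ Ch,
          (∀ w ∈ F, dist w.x y ≤ u ∧ w.r ≤ u) → ∑ w ∈ F, w.r ^ t ≤ L * u ^ t) ∧
        (∀ w ∈ Ch, ∀ w' ∈ Ch, w ≠ w' → ∃ D ⊆ Ch, w ∈ D ∧ w' ∉ D ∧
          ∀ p ∈ D, ∀ q ∈ Ch, q ∉ D → c0 * dist w.x w'.x ≤ dist p.x q.x) ∧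
        ∑ w ∈ Ch, w.a = v.a := by
  classical
  obtain ⟨L, c0, hL, hc0, hc01, hmain⟩ := mstage_step X s t ht hst
  refine ⟨L, c0, hL, hc0, hc01, fun f R n v hv => ?_⟩
  set Q : ℕ → Set X := fun i => f '' cyl (Function.update v.σ n i) (n + 1) with hQ
  have hPQ : v.P ⊆ ⋃ i, Q i := by
    intro p hp
    obtain ⟨τ, hτ, rfl⟩ := hv.sub hp
    refine mem_iUnion.2 ⟨τ n, τ, fun i hi => ?_, rfl⟩
    rcases Nat.lt_succ_iff_lt_or_eq.1 hi with h | rfl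
    · rw [Function.update_of_ne h.ne]; exact hτ i h
    · rw [Function.update_self]
  obtain ⟨ρ, α, b, J, h1, h2, h3, h4, h5, h6⟩ :=
    hmain v.P Q v.r v.a hPQ hv.r_pos hv.heavy hv.a_ge hv.a_le
  set mk : X → Node X := fun j =>
    ⟨Function.update v.σ n (α j), v.P ∩ Q (α j) ∩ Metric.closedBall j (ρ j), j, ρ j, b j⟩ with hmk
  have hinj : Function.Injective mk := fun i j hij => congrArg Node.x hij
  have hmem : ∀ w, w ∈ J.image mk ↔ w.x ∈ J ∧ w = mk w.x := by
    intro w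
    rw [Finset.mem_image]
    constructor
    · rintro ⟨j, hj, rfl⟩; exact ⟨hj, rfl⟩
    · rintro ⟨hj, h⟩; exact ⟨_, hj, h.symm⟩
  refine ⟨J.image mk, ?_, ?_, ?_, ?_, ?_⟩
  · intro w hw
    obtain ⟨j, hj, rfl⟩ := Finset.mem_image.1 hw
    obtain ⟨g1, g2, g3⟩ := h1 j hj
    refine ⟨⟨fun p hp => hp.1.2, fun p hp => hp.2, g1, ?_, g3, (h5 j hj).1, (h5 j hj).2⟩,
      fun p hp => hp.1.1, g2, fun i hi => Function.update_of_ne hi.ne _ _⟩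
    have := hv.r_le
    rw [pow_succ]
    show ρ j ≤ _
    linarith
  · intro w hw w' hw' hne
    obtain ⟨j, hj, rfl⟩ := Finset.mem_image.1 hw
    obtain ⟨j', hj', rfl⟩ := Finset.mem_image.1 hw'
    exact h2 j hj j' hj' fun h => hne (congrArg mk h)
  · intro y u hu F hF hF2
    have hFJ : ∀ w ∈ F, w.x ∈ J ∧ w = mk w.x := fun w hw => (hmem w).1 (hF hw)
    have hr : ∀ w ∈ F, w.r = ρ w.x := fun w hw => by
      have := congrArg Node.r (hFJ w hw).2; exact this
    have := h3 y u hu (F.image Node.x) (by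
      intro j hj
      rw [Finset.mem_coe, Finset.mem_image] at hj
      obtain ⟨w, hw, rfl⟩ := hj
      exact (hFJ w hw).1) (by
      intro j hj
      rw [Finset.mem_image] at hj
      obtain ⟨w, hw, rfl⟩ := hj
      rw [← hr w hw]
      exact hF2 w hw)
    rw [Finset.sum_image] at this
    · rw [Finset.sum_congr rfl fun w hw => by rw [hr w hw]]
      exact this
    · intro w hw w' hw' h
      rw [(hFJ w hw).2, (hFJ w' hw').2, h]
  · intro w hw w' hw' hne
    obtain ⟨j, hj, rfl⟩ := Finset.mem_image.1 hw
    obtain ⟨j', hj', rfl⟩ := Finset.mem_image.1 hw'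
    obtain ⟨C, hC, hjC, hjC', hsep⟩ := h4 j hj j' hj' fun h => hne (congrArg mk h)
    refine ⟨(J.filter (· ∈ C)).image mk, Finset.image_subset_image (Finset.filter_subset _ _),
      Finset.mem_image_of_mem _ (Finset.mem_filter.2 ⟨hj, hjC⟩), ?_, ?_⟩
    · rw [hinj.mem_finset_image]
      exact fun h => hjC' (Finset.mem_filter.1 h).2
    · intro p hp q hq hqD
      obtain ⟨i, hi, rfl⟩ := Finset.mem_image.1 hp
      obtain ⟨l, hl, rfl⟩ := Finset.mem_image.1 hq
      rw [hinj.mem_finset_image, Finset.mem_filter, not_and] at hqD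
      exact hsep i (Finset.mem_filter.1 hi).2 l hl (hqD hl)
  · rw [Finset.sum_image hinj.injOn]
    exact h6

open Classical in
theorem tree_exists (X : Type*) [MetricSpace X] [TopologicalSpace.SeparableSpace X]
    (s t : ℝ) (ht : 1 ≤ t) (hst : t < s) :
    ∃ L c0 : ℝ, 0 < L ∧ 0 < c0 ∧ c0 ≤ 1 ∧ ∀ (f : (ℕ → ℕ) → X), Continuous f → ∀ (R : ℝ)
      (v : Node X), v.Good f s t R 0 → ∃ T : TreeD X (Node X) t L c0 R, T.B ⊆ range f := by
  obtain ⟨L, c0, hL, hc0, hc01, hmain⟩ := children_exist X s t ht hst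
  refine ⟨L, c0, hL, hc0, hc01, fun f hf R v0 hv0 => ?_⟩
  choose! ch h1 h2 h3 h4 h5 using hmain f R
  let lev : ℕ → Finset (Node X) := fun n => Nat.rec {v0} (fun n l => l.biUnion (ch n)) n
  have hlev : ∀ n, ∀ v ∈ lev n, v.Good f s t R n := by
    intro n
    induction n with
    | zero => intro v hv; rw [Finset.mem_singleton.1 hv]; exact hv0
    | succ n ih =>
      intro w hw
      obtain ⟨v, hv, hw⟩ := Finset.mem_biUnion.1 hw
      exact (h1 n v (ih v hv) w hw).1
  let T : TreeD X (Node X) t L c0 R :=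
    { lev := lev
      ch := ch
      K := fun v => closure v.P
      x := Node.x
      r := Node.r
      a := Node.a
      root := v0
      lev_zero := rfl
      lev_succ := fun n => rfl
      closed := fun n v hv => isClosed_closure
      nonempty := fun n v hv => (hlev n v hv).nonempty.closure
      sub_ball := fun n v hv => closure_minimal (hlev n v hv).ball Metric.isClosed_closedBall
      r_pos := fun n v hv => (hlev n v hv).r_pos
      r_le := fun n v hv => (hlev n v hv).r_le
      a_ge := fun n v hv => (hlev n v hv).a_ge
      a_le := fun n v hv => (hlev n v hv).a_le
      ch_sub := fun n v hv w hw => closure_mono (h1 n v (hlev n v hv) w hw).2.1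
      ch_r := fun n v hv w hw => (h1 n v (hlev n v hv) w hw).2.2.1
      ch_sep := fun n v hv => h2 n v (hlev n v hv)
      ch_cap := fun n v hv => h3 n v (hlev n v hv)
      ch_part := fun n v hv => h4 n v (hlev n v hv)
      ch_sum := fun n v hv => h5 n v (hlev n v hv) }
  refine ⟨T, fun y hy => ?_⟩
  have hstep : ∀ n, ∀ i < n, (T.nd (n + 1) y).σ i = (T.nd n y).σ i := fun n =>
    (h1 n _ (hlev n _ (T.nd_mem n hy)) _ (T.nd_ch n hy)).2.2.2
  set σ : ℕ → ℕ := fun i => (T.nd (i + 1) y).σ i with hσ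
  have hcoh : ∀ i m, (T.nd (i + 1 + m) y).σ i = σ i := by
    intro i m
    induction m with
    | zero => rfl
    | succ m ih => rw [← ih]; exact hstep (i + 1 + m) i (by omega)
  have hcyl : ∀ n, cyl (T.nd n y).σ n = cyl σ n := by
    intro n
    have : ∀ i < n, (T.nd n y).σ i = σ i := fun i hi => by
      obtain ⟨m, rfl⟩ : ∃ m, n = i + 1 + m := ⟨n - (i + 1), by omega⟩
      exact hcoh i m
    ext τ
    exact forall₂_congr fun i hi => by rw [this i hi]
  have hyc : ∀ n, y ∈ closure (f '' cyl σ n) := fun n => by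
    rw [← hcyl n]
    exact closure_mono (hlev n _ (T.nd_mem n hy)).sub (T.nd_K n hy)
  refine ⟨σ, ?_⟩
  by_contra hne
  have hd : 0 < dist (f σ) y := dist_pos.2 hne
  have hnh : f ⁻¹' Metric.ball (f σ) (dist (f σ) y / 2) ∈ nhds σ :=
    hf.continuousAt.preimage_mem_nhds (Metric.ball_mem_nhds _ (half_pos hd))
  obtain ⟨n, hn⟩ : ∃ n, cyl σ n ⊆ f ⁻¹' Metric.ball (f σ) (dist (f σ) y / 2) := by
    rw [nhds_pi, Filter.mem_pi'] at hnh
    obtain ⟨I, S, hS, hsub⟩ := hnh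
    refine ⟨I.sup id + 1, fun τ hτ => hsub fun i hi => ?_⟩
    rw [hτ i (Nat.lt_succ_of_le (Finset.le_sup (f := id) hi))]
    exact mem_of_mem_nhds (hS i)
  obtain ⟨z, ⟨τ, hτ, rfl⟩, hz⟩ := Metric.mem_closure_iff.1 (hyc n) _ (half_pos hd)
  have h6 := Metric.mem_ball.1 (hn hτ)
  have h7 := dist_triangle_left (f σ) y (f τ)
  rw [dist_comm y (f τ)] at hz
  linarith

open TopologicalSpace in
theorem final_aux {X : Type*} [MetricSpace X] [CompleteSpace X] [SeparableSpace X]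
    [MeasurableSpace X] [BorelSpace X]
    (A : Set X) (hA : AnalyticSet A) (k : ℕ) (hk : 0 < k) (hdim : (k : ℝ≥0∞) < dimH A) :
    ∃ B : Set X, B ⊆ A ∧ IsCompact B ∧ 0 < μH[(k : ℝ)] B ∧ μH[(k : ℝ)] B < ⊤ ∧
      ∃ c : ℝ, 0 < c ∧ c ≤ 1 ∧ SepProp c B := by
  classical
  obtain ⟨s, hs1, hs2⟩ := ENNReal.lt_iff_exists_nnreal_btwn.1 hdim
  have hks : (k : ℝ) < s := by exact_mod_cast hs1
  have hk1 : (1 : ℝ) ≤ k := by exact_mod_cast hk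
  have hs0 : (0 : ℝ) < s := by linarith
  have hHs : μH[(s : ℝ)] A = ⊤ := hausdorffMeasure_of_lt_dimH hs2
  have hcont : content X s A ≠ 0 := fun h => by
    rw [hausdorff_zero_of_content_zero _ hs0 A h] at hHs
    exact ENNReal.zero_ne_top hHs
  rw [AnalyticSet] at hA
  rcases hA with rfl | ⟨f, hf, hfA⟩
  · simp at hcont
  obtain ⟨L, c0, hL, hc0, hc01, hT⟩ := tree_exists X s k hk1 hks
  have hnull := light_null' (s : ℝ) hs0 A (fun _ => univ) (fun x _ => mem_iUnion.2 ⟨0, trivial⟩) 1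
    one_pos
  obtain ⟨x, hxA, a, ρ, hρ, -, hheavy⟩ : ∃ x ∈ A, ∃ (a : ℕ) (ρ : ℝ), 0 < ρ ∧ ρ ≤ 1 ∧
      ENNReal.ofReal (ρ ^ (s : ℝ) / 4) ≤ content X s (A ∩ univ ∩ Metric.closedBall x ρ) := by
    by_contra! hcon
    refine hcont ?_
    rw [← hnull]
    congr 1
    ext x
    exact ⟨fun hx => ⟨hx, fun a ρ h1 h2 => hcon x hx a ρ h1 h2⟩, fun hx => hx.1⟩
  obtain ⟨T, hTB⟩ := hT f hf ρ ⟨0, A ∩ univ ∩ Metric.closedBall x ρ, x, ρ, ρ ^ (k : ℝ)⟩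
    { sub := fun p hp => by
        have := hp.1.1
        rw [← hfA] at this
        obtain ⟨τ, rfl⟩ := this
        exact ⟨τ, fun i hi => absurd hi (Nat.not_lt_zero i), rfl⟩
      ball := fun p hp => hp.2
      r_pos := hρ
      r_le := by simp
      heavy := hheavy
      a_ge := by
        have := Real.rpow_pos_of_pos hρ (k : ℝ)
        show ρ ^ (k : ℝ) / 2 ≤ ρ ^ (k : ℝ)
        linarith
      a_le := le_rfl }
  have hk0 : (0 : ℝ) < k := by linarith
  exact ⟨T.B, hfA ▸ hTB, T.isCompact_B, T.hausdorff_pos hk0 hL, T.hausdorff_lt_top hk0,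
    c0 / 3, by positivity, by linarith, T.sepProp hc0 hc01⟩

end Helpers

/-- Let `A` be an analytic subset of a complete separable metric space `(X,d)`
and let `k` be a positive integer with `dimH A > k`. Then there exists a compact subset
`B ⊆ A` with `0 < H^k(B) < ∞` together with a metric `d'` on `B` satisfying the ultrametric
inequality such that `d'` is bi-Lipschitz equivalent to `d` on `B`. -/
theorem analytic_exists_compact_subset_biLipschitz_ultrametric
    {X : Type*} [MetricSpace X] [CompleteSpace X] [TopologicalSpace.SeparableSpace X]
    [MeasurableSpace X] [BorelSpace X]
    (A : Set X) (hA : MeasureTheory.AnalyticSet A)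
    (k : ℕ) (hk : 0 < k)
    (hdim : (k : ℝ≥0∞) < dimH A) :
    ∃ B : Set X, B ⊆ A ∧ IsCompact B ∧
      0 < μH[(k : ℝ)] B ∧ μH[(k : ℝ)] B < ⊤ ∧
      ∃ d' : X → X → ℝ,
        (∀ x ∈ B, d' x x = 0) ∧
        (∀ x ∈ B, ∀ y ∈ B, d' x y = d' y x) ∧
        (∀ x ∈ B, ∀ y ∈ B, x ≠ y → 0 < d' x y) ∧
        (∀ x ∈ B, ∀ y ∈ B, ∀ z ∈ B, d' x y ≤ max (d' x z) (d' z y)) ∧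
        ∃ c C : ℝ, 0 < c ∧ c ≤ C ∧
          ∀ x ∈ B, ∀ y ∈ B, c * dist x y ≤ d' x y ∧ d' x y ≤ C * dist x y := by
  obtain ⟨B, hBA, hBc, hpos, hfin, c, hc, hc1, hsep⟩ := final_aux A hA k hk hdim
  obtain ⟨d, h1, h2, h3, h4⟩ := ultrametric_of_sep B c hc hsep
  refine ⟨B, hBA, hBc, hpos, hfin, d, h1, h2, ?_, h3, c, 1, hc, hc1, ?_⟩
  · intro x hx y hy hxy
    exact (mul_pos hc (dist_pos.2 hxy)).trans_le (h4 x hx y hy).1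
  · intro x hx y hy
    rw [one_mul]
    exact h4 x hx y hy
end

section
/- Let (X,d) be a metric space, let ≤ be a linear order on X, and let C > 0 be a constant such that diam {x : a ≤ x ≤ b} ≤ C · d(a,b) for all a,b ∈ X with a ≤ b. Let s > 0 and let μ be a finite Borel measure on X such that μ(E) ≤ (diam E)^s for every E ⊆ X. Then the function g : X → ℝ defined by g(x) = μ({y ∈ X : y < x}) satisfies 0 ≤ g(b) − g(a) ≤ C^s · d(a,b)^s for all a ≤ b; in particular g is s-Hölder with constant C^s. -/
open MeasureTheory
open scoped ENNReal

/-- Let `(X,d)` be a metric space, `≤` a linear order on `X`, and `C > 0` a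
constant such that `diam {x : a ≤ x ≤ b} ≤ C * d(a,b)` for all `a ≤ b`. Let `s > 0` and let `μ`
be a finite Borel measure on `X` such that `μ E ≤ (diam E)^s` for every `E ⊆ X`. Then the
function `g(x) = μ {y : y < x}` satisfies `0 ≤ g(b) - g(a) ≤ C^s * d(a,b)^s` for all `a ≤ b`;
in particular `g` is `s`-Hölder with constant `C^s`. -/
theorem monotone_space_frostman_cdf_holder
    {X : Type*} [MetricSpace X] [MeasurableSpace X] [BorelSpace X]
    (r : LinearOrder X) (C : ℝ) (hC : 0 < C)
    (hmon : ∀ a b : X, r.le a b → Metric.diam {x | r.le a x ∧ r.le x b} ≤ C * dist a b)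
    (s : ℝ) (hs : 0 < s)
    (μ : Measure X) [IsFiniteMeasure μ]
    (hμ : ∀ E : Set X, μ E ≤ ENNReal.ofReal (Metric.diam E ^ s)) :
    (∀ a b : X, r.le a b →
      0 ≤ (μ {y | r.lt y b}).toReal - (μ {y | r.lt y a}).toReal ∧
      (μ {y | r.lt y b}).toReal - (μ {y | r.lt y a}).toReal ≤ C ^ s * dist a b ^ s) ∧
    ∀ x y : X,
      |(μ {z | r.lt z x}).toReal - (μ {z | r.lt z y}).toReal| ≤ C ^ s * dist x y ^ s := by
  have key : ∀ a b : X, r.le a b →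
      0 ≤ (μ {y | r.lt y b}).toReal - (μ {y | r.lt y a}).toReal ∧
      (μ {y | r.lt y b}).toReal - (μ {y | r.lt y a}).toReal ≤ C ^ s * dist a b ^ s := by
    intro a b hab
    constructor
    · have h : μ {y | r.lt y a} ≤ μ {y | r.lt y b} :=
        measure_mono (fun y hy => @lt_of_lt_of_le X _ y a b hy hab)
      have := ENNReal.toReal_mono (measure_ne_top μ _) h
      linarith
    · have hsub : {y | r.lt y b} ⊆ {y | r.lt y a} ∪ {x | r.le a x ∧ r.le x b} := by
        intro y hy
        rcases @lt_or_ge X r y a with h | h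
        · exact Or.inl h
        · exact Or.inr ⟨h, @le_of_lt X _ y b hy⟩
      have h1 := (measure_mono hsub).trans (measure_union_le (μ := μ) _ _)
      have h2 := ENNReal.toReal_mono
        (ENNReal.add_ne_top.2 ⟨measure_ne_top μ _, measure_ne_top μ _⟩) h1
      rw [ENNReal.toReal_add (measure_ne_top μ _) (measure_ne_top μ _)] at h2
      have h3 : (μ {x | r.le a x ∧ r.le x b}).toReal
          ≤ Metric.diam {x | r.le a x ∧ r.le x b} ^ s :=
        ENNReal.toReal_le_of_le_ofReal (Real.rpow_nonneg Metric.diam_nonneg _) (hμ _)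
      have h4 : Metric.diam {x | r.le a x ∧ r.le x b} ^ s ≤ (C * dist a b) ^ s :=
        Real.rpow_le_rpow Metric.diam_nonneg (hmon a b hab) hs.le
      rw [Real.mul_rpow hC.le dist_nonneg] at h4
      linarith
  refine ⟨key, fun x y => ?_⟩
  rcases r.le_total x y with h | h
  · obtain ⟨h1, h2⟩ := key x y h
    rw [abs_sub_comm, abs_of_nonneg h1]
    exact h2
  · obtain ⟨h1, h2⟩ := key y x h
    rw [abs_of_nonneg h1, dist_comm x y]
    exact h2
end
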